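/- arXiv:2404.05963 — 11 statements merged into one kernel-verified Lean document; each statement's English description precedes it below -/
import Mathlib

section
/- Let G be a finite simple graph of order n ≥ 4 with no isolated vertices. Then every subset of vertices of cardinality ⌊n/2⌋ is a fort of G if and only if the minimum degree satisfies δ(G) ≥ ⌈n/2⌉ + 1. Similarly, every subset of vertices of cardinality ⌈n/2⌉ is a fort of G if and only if the minimum degree satisfies δ(G) ≥ ⌊n/2⌋ + 1. -/
/-!
Both equivalences are instances of one fact, valid for every `k ≥ 1` in a graph of order `n`
without isolated vertices: all `k`-sets are forts iff `δ(G) + k ≥ n + 1`.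

If the degree condition holds and `u ∉ F` with `|F| = k`, then `u` has at most `n - k - 1`
neighbors outside `F`, hence at least two in `F`. Conversely, if some `u` has `deg u ≤ n - k`,
then `u` has at least `k - 1` non-neighbors other than itself; any `k - 1` of these together
with one neighbor of `u` form a `k`-set in which `u` has exactly one neighbor.
-/

open SimpleGraph

/-- A nonempty set `F` of vertices is a *fort* of `G` if no vertex outside `F`
has exactly one neighbor in `F`. -/
def IsFort {V : Type*} (G : SimpleGraph V) (F : Set V) : Prop :=
  F.Nonempty ∧ ∀ u ∉ F, ¬ (∃! w, w ∈ F ∧ G.Adj u w)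

/-- A fort is *minimal* if no proper subset is a fort. -/
def IsMinimalFort {V : Type*} (G : SimpleGraph V) (F : Set V) : Prop :=
  IsFort G F ∧ ∀ F' ⊂ F, ¬ IsFort G F'

/-- The number of minimal forts of a graph. -/
noncomputable def numMinimalForts {V : Type*} (G : SimpleGraph V) : ℕ :=
  {F : Set V | IsMinimalFort G F}.ncard

/-- The witness consists of one neighbor of `u` and `k - 1` non-neighbors other than `u`. -/
lemma exists_not_isFort_of_degree_add_le {V : Type*} [Fintype V]
    (G : SimpleGraph V) [DecidableRel G.Adj] {k : ℕ} (hk : 1 ≤ k) (u : V)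
    (hu : G.degree u ≠ 0) (hd : G.degree u + k ≤ Fintype.card V) :
    ∃ F : Set V, F.ncard = k ∧ ¬ IsFort G F := by
  classical
  obtain ⟨w, hw⟩ := (G.degree_pos_iff_exists_adj u).1 (Nat.pos_of_ne_zero hu)
  have hcard : (insert u (G.neighborFinset u))ᶜ.card = Fintype.card V - (G.degree u + 1) := by
    rw [Finset.card_compl, Finset.card_insert_of_notMem (by simp), G.card_neighborFinset_eq_degree]
  obtain ⟨T, hT, hTk⟩ : ∃ T ⊆ (insert u (G.neighborFinset u))ᶜ, T.card = k - 1 :=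
    Finset.exists_subset_card_eq (by omega)
  have hT' : ∀ x ∈ T, x ≠ u ∧ ¬ G.Adj u x := fun x hx => by
    simpa using hT hx
  have hwT : w ∉ T := fun h => (hT' w h).2 hw
  refine ⟨↑(insert w T), ?_, fun hF => ?_⟩
  · rw [Set.ncard_coe_finset, Finset.card_insert_of_notMem hwT]
    omega
  · refine hF.2 u ?_ ⟨w, ⟨by simp, hw⟩, ?_⟩
    · simp only [Finset.coe_insert, Set.mem_insert_iff, Finset.mem_coe, not_or]
      exact ⟨hw.ne, fun h => (hT' u h).1 rfl⟩
    · rintro y ⟨hy, hay⟩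
      simp only [Finset.coe_insert, Set.mem_insert_iff, Finset.mem_coe] at hy
      exact hy.resolve_right fun h => (hT' y h).2 hay

lemma isFort_of_card_lt_degree_add {V : Type*} [Fintype V]
    (G : SimpleGraph V) [DecidableRel G.Adj] {F : Set V} (hF : F.Nonempty)
    (hd : ∀ u, Fintype.card V + 1 ≤ G.degree u + F.ncard) : IsFort G F := by
  classical
  refine ⟨hF, fun u hu ⟨w, _, huniq⟩ => ?_⟩
  -- A unique neighbor `w` of `u` in `F` makes `N(u)` and `F \ {w}` disjoint subsets of `V \ {u}`.
  have hdisj : Disjoint (G.neighborFinset u) (F.toFinset.erase w) := by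
    rw [Finset.disjoint_left]
    intro x hx hxF
    simp only [Finset.mem_erase, Set.mem_toFinset] at hxF
    exact hxF.1 (huniq x ⟨hxF.2, by simpa using hx⟩)
  have hsub : G.neighborFinset u ∪ F.toFinset.erase w ⊆ Finset.univ.erase u := by
    intro x hx
    simp only [Finset.mem_union, Finset.mem_erase, Set.mem_toFinset, mem_neighborFinset] at hx
    simp only [Finset.mem_erase, Finset.mem_univ, and_true]
    rintro rfl
    rcases hx with hx | hx
    · exact G.loopless.irrefl _ hx
    · exact hu hx.2
  have h1 := Finset.card_le_card hsub
  have h2 : F.toFinset.card - 1 ≤ (F.toFinset.erase w).card := Finset.pred_card_le_card_erase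
  have hV : 0 < Fintype.card V := Fintype.card_pos_iff.2 ⟨u⟩
  rw [Finset.card_union_of_disjoint hdisj, Finset.card_erase_of_mem (Finset.mem_univ u),
    G.card_neighborFinset_eq_degree, Finset.card_univ] at h1
  have h3 := hd u
  rw [Set.ncard_eq_toFinset_card'] at h3
  omega

lemma forall_ncard_isFort_iff {V : Type*} [Fintype V] [Nonempty V]
    (G : SimpleGraph V) [DecidableRel G.Adj] (hiso : ∀ v : V, G.degree v ≠ 0)
    {k : ℕ} (hk : 1 ≤ k) :
    (∀ F : Set V, F.ncard = k → IsFort G F) ↔ Fintype.card V + 1 ≤ G.minDegree + k := by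
  constructor
  · intro h
    by_contra hlt
    obtain ⟨u, hu⟩ := G.exists_minimal_degree_vertex
    obtain ⟨F, hFk, hF⟩ := exists_not_isFort_of_degree_add_le G hk u (hiso u) (by omega)
    exact hF (h F hFk)
  · intro h F hFk
    refine isFort_of_card_lt_degree_add G (Set.nonempty_of_ncard_ne_zero (by omega)) fun u => ?_
    have := G.minDegree_le_degree u
    omega

/-- **Lemma (high degree).** For a graph `G` of order `n ≥ 4` with no isolated
vertices: every vertex subset of cardinality `⌊n/2⌋` is a fort of `G` iff
`δ(G) ≥ ⌈n/2⌉ + 1`; and every vertex subset of cardinality `⌈n/2⌉` is a fort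
of `G` iff `δ(G) ≥ ⌊n/2⌋ + 1`. -/
theorem all_half_sets_fort_iff_minDegree {V : Type*} [Fintype V]
    (G : SimpleGraph V) [DecidableRel G.Adj]
    (hn : 4 ≤ Fintype.card V) (hiso : ∀ v : V, G.degree v ≠ 0) :
    ((∀ F : Set V, F.ncard = Fintype.card V / 2 → IsFort G F) ↔
        (Fintype.card V + 1) / 2 + 1 ≤ G.minDegree) ∧
    ((∀ F : Set V, F.ncard = (Fintype.card V + 1) / 2 → IsFort G F) ↔
        Fintype.card V / 2 + 1 ≤ G.minDegree) := by
  have : Nonempty V := Fintype.card_pos_iff.1 (by omega)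
  rw [forall_ncard_isFort_iff G hiso (by omega), forall_ncard_isFort_iff G hiso (by omega)]
  omega
end

section
/- Let G be a finite simple graph of order n ≥ 6. If the minimum degree satisfies δ(G) ≥ ⌈n/2⌉ + 1, then there exists a fort of G with cardinality strictly less than ⌊n/2⌋. Similarly, if δ(G) ≥ ⌊n/2⌋ + 1, then there exists a fort of G with cardinality strictly less than ⌈n/2⌉. -/
/-!
Both halves follow from one bound: if `2 ≤ s ≤ n ≤ s + δ(G)`, then `G` has a fort with at most `s`
vertices (`exists_fort_le`); take `s = ⌊n/2⌋ - 1` or `s = ⌈n/2⌉ - 1`.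

If every degree exceeds `n - s`, any set `S` of `s` vertices is a fort, since a vertex outside `S`
with only one neighbor in `S` has degree at most `(n - s - 1) + 1`. Otherwise some `v` has degree
exactly `n - s`, and the complement `F` of its neighborhood has `s` elements. If `F` is not a fort,
some neighbor `u` of `v` has `v` as its only neighbor in `F`, so `N(u) ∖ {v} ⊆ N(v) ∖ {u}`. As
`deg u ≥ deg v`, these sets are equal, and the pair of twins `{u, v}` is a fort.
-/

open SimpleGraph

/-- A graph of order `n` with `2 ≤ s ≤ n ≤ s + δ(G)` has a fort with at most `s` vertices. -/
theorem exists_fort_le {V : Type*} [Fintype V] (G : SimpleGraph V) [DecidableRel G.Adj] (s : ℕ)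
    (hs : 2 ≤ s) (hsn : s ≤ Fintype.card V) (hd : Fintype.card V ≤ s + G.minDegree) :
    ∃ F : Set V, IsFort G F ∧ F.ncard ≤ s := by
  classical
  by_cases hv : ∃ v, G.degree v + s = Fintype.card V
  · obtain ⟨v, hv⟩ := hv
    by_cases hF : IsFort G (((G.neighborFinset v)ᶜ : Finset V) : Set V)
    · refine ⟨_, hF, ?_⟩
      rw [Set.ncard_coe_finset, Finset.card_compl, card_neighborFinset_eq_degree]
      omega
    · have hne : (((G.neighborFinset v)ᶜ : Finset V) : Set V).Nonempty := ⟨v, by simp⟩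
      simp only [IsFort, hne, true_and, not_forall, not_not] at hF
      obtain ⟨u, hu, w, -, hw⟩ := hF
      have hvu : G.Adj v u := by simpa using hu
      have hwv : v = w := hw v ⟨by simp, hvu.symm⟩
      subst hwv
      have hsub : (G.neighborFinset u).erase v ⊆ (G.neighborFinset v).erase u := by
        intro x hx
        simp only [Finset.mem_erase, mem_neighborFinset] at hx ⊢
        refine ⟨hx.2.ne', ?_⟩
        by_contra h
        exact hx.1 (hw x ⟨by simpa using h, hx.2⟩)
      have heq : (G.neighborFinset u).erase v = (G.neighborFinset v).erase u := by
        apply Finset.eq_of_subset_of_card_le hsub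
        rw [Finset.card_erase_of_mem (by simpa using hvu),
          Finset.card_erase_of_mem (by simpa using hvu.symm), card_neighborFinset_eq_degree,
          card_neighborFinset_eq_degree]
        have := G.minDegree_le_degree u
        omega
      refine ⟨{u, v}, ⟨⟨u, by simp⟩, ?_⟩, (Set.ncard_pair hvu.ne').trans_le hs⟩
      rintro x hx ⟨y, ⟨hy, hxy⟩, huniq⟩
      simp only [Set.mem_insert_iff, Set.mem_singleton_iff, not_or] at hx hy
      have hiff : G.Adj x u ↔ G.Adj x v := by
        have := Finset.ext_iff.1 heq x
        simpa [hx.1, hx.2, G.adj_comm] using this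
      have hboth : G.Adj x u ∧ G.Adj x v := by
        rcases hy with rfl | rfl
        · exact ⟨hxy, hiff.1 hxy⟩
        · exact ⟨hiff.2 hxy, hxy⟩
      exact hvu.ne ((huniq v ⟨by simp, hboth.2⟩).trans (huniq u ⟨by simp, hboth.1⟩).symm)
  · obtain ⟨S, -, hS⟩ := Finset.exists_subset_card_eq (s := (Finset.univ : Finset V)) hsn
    refine ⟨S, ⟨?_, ?_⟩, by rw [Set.ncard_coe_finset, hS]⟩
    · exact Finset.coe_nonempty.2 (Finset.card_pos.1 (by omega))
    · rintro u hu ⟨w, -, huniq⟩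
      have hsub : G.neighborFinset u ⊆ insert w (Sᶜ.erase u) := by
        intro x hx
        rw [mem_neighborFinset] at hx
        by_cases hxS : x ∈ S
        · simp [huniq x ⟨hxS, hx⟩]
        · simp [hxS, hx.ne']
      have hcard := (Finset.card_le_card hsub).trans (Finset.card_insert_le _ _)
      have huS : u ∈ Sᶜ := by simpa using hu
      have hpos := Finset.card_pos.2 ⟨u, huS⟩
      rw [Finset.card_erase_of_mem huS, card_neighborFinset_eq_degree] at hcard
      rw [Finset.card_compl] at hcard hpos
      have := G.minDegree_le_degree u
      exact hv ⟨u, by omega⟩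

/-- **Theorem (smaller fort).** Let `G` have order `n ≥ 6`.
If `δ(G) ≥ ⌈n/2⌉ + 1`, then `G` has a fort of cardinality less than `⌊n/2⌋`;
if `δ(G) ≥ ⌊n/2⌋ + 1`, then `G` has a fort of cardinality less than `⌈n/2⌉`. -/
theorem exists_fort_lt_half {V : Type*} [Fintype V]
    (G : SimpleGraph V) [DecidableRel G.Adj] (hn : 6 ≤ Fintype.card V) :
    ((Fintype.card V + 1) / 2 + 1 ≤ G.minDegree →
        ∃ F : Set V, IsFort G F ∧ F.ncard < Fintype.card V / 2) ∧
    (Fintype.card V / 2 + 1 ≤ G.minDegree →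
        ∃ F : Set V, IsFort G F ∧ F.ncard < (Fintype.card V + 1) / 2) := by
  constructor
  · intro h
    obtain ⟨F, hF, hc⟩ := exists_fort_le G (Fintype.card V / 2 - 1) (by omega) (by omega) (by omega)
    exact ⟨F, hF, by omega⟩
  · intro h
    obtain ⟨F, hF, hc⟩ :=
      exists_fort_le G ((Fintype.card V + 1) / 2 - 1) (by omega) (by omega) (by omega)
    exact ⟨F, hF, by omega⟩
end

section
/- Let G be a finite simple graph of order n ≥ 6 and let 𝓕_G denote the collection of all minimal forts of G. Then |𝓕_G| < C(n, ⌊n/2⌋), i.e., the number of minimal forts of G is strictly less than the binomial coefficient n choose ⌊n/2⌋. -/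
/-!
The minimal forts form an antichain, so Sperner's theorem gives `≤`. Equality in Sperner's theorem
(`exists_layer_of_sperner_eq`) forces the family to contain a whole layer, of sets of size
`k = ⌊n/2⌋` or `k = ⌈n/2⌉`; it remains to see that the `k`-sets cannot all be minimal forts.

*Equality in Sperner.* By LYM, every member has size `⌊n/2⌋` or `⌈n/2⌉`. If both sizes
occur, then `n = 2m + 1`, and the upper part `𝒰` satisfies `#∂𝒰 ≤ #𝒰`. Pairs `(t, a)` with
`a ∈ t ∈ 𝒰` inject into pairs `(s, b)` with `b ∉ s ∈ ∂𝒰`, by deleting `a`; the cardinalities make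
this a bijection, so `𝒰` is closed under exchanging one element and is the full layer.

*No full layer* (`not_all_minimalFort`). Suppose all `k`-sets are minimal forts, and let `M u` be
the set of non-neighbors of `u`. No vertex is isolated, since an isolated vertex is a fort. As
no `k`-set has exactly one neighbor of an outside vertex `u`, `#M u ≤ k - 2`. As no
`(k-1)`-set is a fort, each one is `M u ∪ {w}` for some neighbor `w` of `u` with `#M u = k - 2`.
Hence `C(n, k-1) ≤ n (n-k+1)`, which is false for `k ≥ 4`. For `k = 3` non-adjacency is a matching,
and a pair of non-adjacent vertices (any pair, if there is none) is not of that form.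
-/

open SimpleGraph

open Finset
open scoped FinsetFamily

/-! ### Equality in Sperner's theorem -/

/-- A family closed under exchanging one element contains, with a set `t`, every set `t'` of the
same size; `d` is the induction parameter. -/
lemma mem_of_exchange {α : Type*} [DecidableEq α] {𝒰 : Finset (Finset α)}
    (hex : ∀ t ∈ 𝒰, ∀ a ∈ t, ∀ b ∉ t, insert b (t.erase a) ∈ 𝒰) (t' : Finset α) (d : ℕ) :
    ∀ t ∈ 𝒰, #t = #t' → #(t' \ t) = d → t' ∈ 𝒰 := by
  induction d with
  | zero =>
    intro t ht hc hd
    have hsub : t' ⊆ t := by simpa [sdiff_eq_empty_iff_subset] using hd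
    rwa [eq_of_subset_of_card_le hsub hc.le]
  | succ d ih =>
    intro t ht hc hd
    obtain ⟨b, hb⟩ : (t' \ t).Nonempty := card_pos.1 (by omega)
    obtain ⟨a, ha⟩ : (t \ t').Nonempty := card_pos.1 (by
      have := card_sdiff_add_card_inter t t'
      have := card_sdiff_add_card_inter t' t
      rw [inter_comm] at this
      omega)
    rw [mem_sdiff] at ha hb
    refine ih _ (hex t ht a ha.1 b hb.2) ?_ ?_
    · rw [card_insert_of_notMem (by simp [hb.2]), card_erase_of_mem ha.1, ← hc]
      have := card_pos.2 ⟨a, ha.1⟩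
      omega
    · have : t' \ insert b (t.erase a) = (t' \ t).erase b := by
        ext x
        simp only [mem_sdiff, mem_insert, mem_erase]
        have : x = a → x ∉ t' := fun h => h ▸ ha.2
        tauto
      rw [this, card_erase_of_mem (mem_sdiff.2 hb), hd]
      rfl

/-- The equality case of the local LYM inequality from layer `m + 1` to layer `m` of a set of size
`2 * m + 1`: a family whose shadow is no larger than the
family itself is closed under exchange. -/
lemma exchange_of_card_shadow_le {α : Type*} [Fintype α] [DecidableEq α] {m : ℕ}
    (hn : Fintype.card α = 2 * m + 1) {𝒰 : Finset (Finset α)} (hs : ∀ t ∈ 𝒰, #t = m + 1)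
    (hle : #(∂ 𝒰) ≤ #𝒰) :
    ∀ t ∈ 𝒰, ∀ a ∈ t, ∀ b ∉ t, insert b (t.erase a) ∈ 𝒰 := by
  intro t ht a ha b hb
  let P : Finset (Σ _ : Finset α, α) := 𝒰.sigma fun t => t
  let Q : Finset (Σ _ : Finset α, α) := (∂ 𝒰).sigma fun s => sᶜ
  let f : (Σ _ : Finset α, α) → (Σ _ : Finset α, α) := fun p => ⟨p.1.erase p.2, p.2⟩
  have hP : #P = #𝒰 * (m + 1) := by
    rw [card_sigma, sum_const_nat hs]
  have hQ : #Q = #(∂ 𝒰) * (m + 1) := by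
    rw [card_sigma]
    refine sum_const_nat fun s hs' => ?_
    obtain ⟨t, ht, a, ha, rfl⟩ := mem_shadow_iff.1 hs'
    rw [card_compl, card_erase_of_mem ha, hs t ht, hn]
    omega
  have hinj : Set.InjOn f P := by
    rintro ⟨t₁, a₁⟩ h₁ ⟨t₂, a₂⟩ h₂ h
    simp only [P, coe_sigma, Set.mem_sigma_iff, mem_coe] at h₁ h₂
    simp only [f, Sigma.mk.injEq, heq_eq_eq] at h
    obtain ⟨h, rfl⟩ := h
    have : t₁ = t₂ := by rw [← insert_erase h₁.2, h, insert_erase h₂.2]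
    rw [this]
  have himg : P.image f = Q := by
    refine eq_of_subset_of_card_le ?_ ?_
    · rw [image_subset_iff]
      rintro ⟨t₁, a₁⟩ h₁
      simp only [P, mem_sigma] at h₁
      simp only [f, Q, mem_sigma, mem_compl]
      exact ⟨erase_mem_shadow h₁.1 h₁.2, by simp⟩
    · rw [card_image_of_injOn hinj, hP, hQ]
      exact Nat.mul_le_mul_right _ hle
  have hmem : (⟨t.erase a, b⟩ : Σ _ : Finset α, α) ∈ P.image f := by
    rw [himg]
    simp only [Q, mem_sigma, mem_compl]
    exact ⟨erase_mem_shadow ht ha, fun h => hb (mem_of_mem_erase h)⟩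
  obtain ⟨⟨t₁, a₁⟩, h₁, h⟩ := mem_image.1 hmem
  simp only [P, mem_sigma] at h₁
  simp only [f, Sigma.mk.injEq, heq_eq_eq] at h
  obtain ⟨h, rfl⟩ := h
  rw [← h, insert_erase h₁.2]
  exact h₁.1

/-- Only the middle binomial coefficients attain the maximum of their row. -/
lemma eq_middle_of_choose_eq {n r : ℕ} (hr : r ≤ n) (h : n.choose r = n.choose (n / 2)) :
    r = n / 2 ∨ r = (n + 1) / 2 := by
  have key : ∀ r, r < n / 2 → n.choose r < n.choose (n / 2) := by
    intro r hr
    refine lt_of_lt_of_le ?_ (Nat.choose_le_middle (r + 1) n)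
    have h1 := Nat.choose_succ_right_eq n r
    have h2 : 0 < n.choose r := Nat.choose_pos (by omega)
    have h3 : r + 1 < n - r := by omega
    by_contra! hc
    have := Nat.mul_le_mul_right (r + 1) hc
    have := Nat.mul_lt_mul_of_pos_left h3 h2
    omega
  by_contra! hc
  rcases lt_or_ge r (n / 2) with h' | h'
  · exact (key r h').ne h
  · have := key (n - r) (by omega)
    rw [Nat.choose_symm hr] at this
    exact this.ne h

/-- An antichain attaining Sperner's bound contains a full middle layer. -/
lemma exists_layer_of_sperner_eq {α : Type*} [Fintype α] [DecidableEq α]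
    {𝒜 : Finset (Finset α)} (h𝒜 : IsAntichain (· ⊆ ·) (SetLike.coe 𝒜))
    (hc : (Fintype.card α).choose (Fintype.card α / 2) ≤ #𝒜) :
    ∃ k, (k = Fintype.card α / 2 ∨ k = (Fintype.card α + 1) / 2) ∧
      ∀ s : Finset α, #s = k → s ∈ 𝒜 := by
  set n := Fintype.card α with hn
  have hsz : ∀ s ∈ 𝒜, #s = n / 2 ∨ #s = (n + 1) / 2 := by
    intro s hs
    refine eq_middle_of_choose_eq s.card_le_univ ?_
    by_contra hne
    have hlt := lt_of_le_of_ne (Nat.choose_le_middle (#s) n) hne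
    have hpos : (0 : ℚ) < n.choose (n / 2) := mod_cast Nat.choose_pos (Nat.div_le_self _ _)
    have hlym := lubell_yamamoto_meshalkin_inequality_sum_inv_choose (𝕜 := ℚ) h𝒜
    have hstrict : ∑ s ∈ 𝒜, ((n.choose (n / 2) : ℚ))⁻¹ < ∑ s ∈ 𝒜, ((n.choose #s : ℚ))⁻¹ := by
      refine sum_lt_sum (fun t _ => ?_) ⟨s, hs, ?_⟩
      · have : (0 : ℚ) < n.choose #t := mod_cast Nat.choose_pos t.card_le_univ
        exact inv_anti₀ this (mod_cast Nat.choose_le_middle _ _)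
      · have : (0 : ℚ) < n.choose #s := mod_cast Nat.choose_pos s.card_le_univ
        exact inv_strictAnti₀ this (mod_cast hlt)
    have h1 := hstrict.trans_le hlym
    rw [sum_const, nsmul_eq_mul, ← div_eq_mul_inv, div_lt_one hpos] at h1
    exact absurd hc (not_le.2 (mod_cast h1))
  by_cases hall : ∀ s ∈ 𝒜, #s = n / 2
  · refine ⟨n / 2, Or.inl rfl, fun s hs => ?_⟩
    have : 𝒜 = powersetCard (n / 2) univ := by
      refine eq_of_subset_of_card_le (fun s hs => by simp [mem_powersetCard, hall s hs]) ?_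
      rwa [card_powersetCard, card_univ]
    rw [this]
    simp [mem_powersetCard, hs]
  · push Not at hall
    obtain ⟨t, ht, htn⟩ := hall
    have htc := (hsz t ht).resolve_left htn
    obtain ⟨m, hm⟩ : ∃ m, n = 2 * m + 1 := ⟨n / 2, by omega⟩
    have e1 : n / 2 = m := by omega
    have e2 : (n + 1) / 2 = m + 1 := by omega
    rw [e1] at hc
    rw [e1, e2] at hsz ⊢
    rw [e2] at htc
    let 𝒰 := 𝒜.filter fun s => #s = m + 1
    let ℒ := 𝒜.filter fun s => ¬ #s = m + 1
    have hUL : #𝒰 + #ℒ = #𝒜 := card_filter_add_card_filter_not _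
    have hUs : ∀ t ∈ 𝒰, #t = m + 1 := fun t ht => (mem_filter.1 ht).2
    have hsh : ∀ s ∈ ∂ 𝒰, #s = m := by
      intro s hs
      obtain ⟨t, ht, a, ha, rfl⟩ := mem_shadow_iff.1 hs
      rw [card_erase_of_mem ha, hUs t ht]
      rfl
    have hdisj : Disjoint (∂ 𝒰) ℒ := by
      rw [Finset.disjoint_left]
      intro s hs hs'
      obtain ⟨t, ht, a, ha, rfl⟩ := mem_shadow_iff.1 hs
      have := h𝒜.eq (mem_filter.1 hs').1 (mem_filter.1 ht).1 (erase_subset a t)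
      exact (erase_ne_self.2 ha) this
    have hle : #(∂ 𝒰) + #ℒ ≤ n.choose m := by
      rw [← card_union_of_disjoint hdisj, hn, ← card_univ, ← card_powersetCard]
      refine card_le_card fun s hs => ?_
      rw [mem_powersetCard]
      refine ⟨subset_univ _, ?_⟩
      rcases mem_union.1 hs with h | h
      · exact hsh s h
      · exact (hsz s (mem_filter.1 h).1).resolve_right (mem_filter.1 h).2
    have hex := exchange_of_card_shadow_le (hn.symm.trans hm) hUs (by omega)
    refine ⟨m + 1, Or.inr rfl, fun s hs => ?_⟩
    exact (mem_filter.1 (mem_of_exchange hex s _ t (mem_filter.2 ⟨ht, htc⟩)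
      (htc.trans hs.symm) rfl)).1

/-! ### Full layers are not families of minimal forts -/

/-- The binomial estimate contradicting the count of `(k - 1)`-sets, with `r = k - 1`. The step from
`(n, r)` to `(n + 2, r + 1)` at least triples the right-hand side. -/
lemma mul_lt_choose (r : ℕ) (hr : 3 ≤ r) :
    ∀ n, 2 * r + 1 ≤ n → n ≤ 2 * r + 3 → n * (n - r) < n.choose r := by
  induction r, hr using Nat.le_induction with
  | base =>
    intro n h1 h2
    interval_cases n <;> decide
  | succ r hr ih =>
    intro n h1 h2
    obtain ⟨m, rfl⟩ : ∃ m, n = m + 2 := ⟨n - 2, by omega⟩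
    obtain ⟨q, rfl⟩ : ∃ q, r = q + 1 := ⟨r - 1, by omega⟩
    have h := ih m (by omega) (by omega)
    have hmono : m.choose (q + 1) ≤ m.choose (q + 2) := by
      have h1 := Nat.choose_succ_right_eq m (q + 1)
      have h2 : q + 1 + 1 ≤ m - (q + 1) := by omega
      refine Nat.le_of_mul_le_mul_right ?_ (Nat.succ_pos (q + 1))
      exact (Nat.mul_le_mul_left _ h2).trans h1.ge
    have e : (m + 2).choose (q + 1 + 1)
        = m.choose q + 2 * m.choose (q + 1) + m.choose (q + 2) := by
      rw [Nat.choose_succ_succ' (m + 1), Nat.choose_succ_succ' m, Nat.choose_succ_succ' m]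
      ring
    have h3 : 3 * (m * (m - (q + 1))) + 2 ≤ (m + 2).choose (q + 1 + 1) := by
      have : 0 < m.choose q := Nat.choose_pos (by omega)
      omega
    refine lt_of_lt_of_le ?_ h3
    obtain ⟨p, rfl⟩ : ∃ p, m = q + 1 + p := ⟨m - (q + 1), by omega⟩
    rw [show q + 1 + p - (q + 1) = p by omega, show q + 1 + p + 2 - (q + 1 + 1) = p + 1 by omega]
    have : 3 ≤ p := by omega
    nlinarith

/-- The sets of middle size `k` are not all minimal forts; `M u` is the set of non-neighbors of `u`
other than `u` itself. -/
lemma not_all_minimalFort {V : Type*} [Fintype V] (G : SimpleGraph V) (k : ℕ)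
    (hn : 6 ≤ Fintype.card V)
    (hk : k = Fintype.card V / 2 ∨ k = (Fintype.card V + 1) / 2)
    (hall : ∀ s : Finset V, #s = k → IsMinimalFort G (s : Set V)) : False := by
  classical
  set n := Fintype.card V with hnV
  have hext : ∀ s : Finset V, #s ≤ k → ∃ t, s ⊆ t ∧ #t = k := fun s hs => by
    obtain ⟨t, h1, -, h3⟩ := exists_subsuperset_card_eq (subset_univ s) hs
      (by rw [card_univ]; omega)
    exact ⟨t, h1, h3⟩
  have hnot : ∀ s : Finset V, #s < k → ¬ IsFort G (s : Set V) := fun s hs => by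
    obtain ⟨t, h1, h2⟩ := hext s hs.le
    refine (hall t h2).2 _ (coe_ssubset.2 (ssubset_of_subset_of_ne h1 ?_))
    rintro rfl
    omega
  have hnbr : ∀ u, ∃ w, G.Adj u w := by
    intro u
    by_contra! hu
    refine hnot {u} (by rw [card_singleton]; omega) ⟨by simp, fun x _ => ?_⟩
    rintro ⟨w, ⟨hw, hxw⟩, -⟩
    rw [coe_singleton, Set.mem_singleton_iff] at hw
    subst hw
    exact hu x hxw.symm
  let M : V → Finset V := fun u => univ.filter fun x => x ≠ u ∧ ¬ G.Adj u x
  have hM : ∀ u x, x ∈ M u ↔ x ≠ u ∧ ¬ G.Adj u x := fun u x => by simp [M]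
  have hMsymm : ∀ u x, x ∈ M u → u ∈ M x := fun u x h => by
    rw [hM] at h ⊢
    exact ⟨h.1.symm, fun h' => h.2 h'.symm⟩
  have hMcard : ∀ u, #(M u) + 2 ≤ k := by
    intro u
    by_contra! hc
    obtain ⟨T, hT, hTc⟩ := exists_subset_card_eq (show k - 1 ≤ #(M u) by omega)
    obtain ⟨w, hw⟩ := hnbr u
    have hwT : w ∉ T := fun h => ((hM u w).1 (hT h)).2 hw
    have hfort := (hall (insert w T) (by rw [card_insert_of_notMem hwT]; omega)).1
    refine hfort.2 u ?_ ⟨w, ⟨by simp, hw⟩, ?_⟩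
    · rw [mem_coe, mem_insert]
      rintro (h | h)
      · exact hw.ne h
      · exact ((hM u u).1 (hT h)).1 rfl
    · rintro y ⟨hy, huy⟩
      rw [mem_coe, mem_insert] at hy
      exact hy.resolve_right fun h => ((hM u y).1 (hT h)).2 huy
  have hrep : ∀ F : Finset V, #F + 1 = k →
      ∃ u ∉ F, ∃ w, G.Adj u w ∧ #(M u) + 2 = k ∧ F = insert w (M u) := by
    intro F hF
    have h := hnot F (by omega)
    have hne : (F : Set V).Nonempty := coe_nonempty.2 (card_pos.1 (by omega))
    simp only [IsFort, hne, true_and] at h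
    push Not at h
    obtain ⟨u, hu, w, ⟨hwF, huw⟩, huniq⟩ := h
    rw [mem_coe] at hu hwF
    have hsub : F.erase w ⊆ M u := by
      intro x hx
      rw [mem_erase] at hx
      rw [hM]
      refine ⟨fun h => hu (h ▸ hx.2), fun h => hx.1 (huniq x ⟨hx.2, h⟩)⟩
    have hc : #(F.erase w) + 2 = k := by
      rw [card_erase_of_mem hwF]
      omega
    have heq := eq_of_subset_of_card_le hsub (by have := hMcard u; omega)
    exact ⟨u, hu, w, huw, by rw [← heq, hc], by rw [← heq, insert_erase hwF]⟩
  rcases Nat.lt_or_ge k 4 with hk4 | hk4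
  · obtain rfl : k = 3 := by omega
    have hone : ∀ u x y, x ∈ M u → y ∈ M u → x = y := fun u x y hx hy =>
      card_le_one.1 (by have := hMcard u; omega) x hx y hy
    -- Some pair is of the given form, so there are non-adjacent vertices `u` and `x`.
    obtain ⟨F, -, hF⟩ := exists_subset_card_eq (show 2 ≤ #(univ : Finset V) by
      rw [card_univ]; omega)
    obtain ⟨u, -, -, -, hu, -⟩ := hrep F (by omega)
    obtain ⟨x, hx⟩ := card_pos.1 (show 0 < #(M u) by omega)
    have hux : u ≠ x := ((hM u x).1 hx).1.symm
    obtain ⟨v, hv, w, -, hvc, hvF⟩ := hrep {u, x} (by rw [card_pair hux])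
    obtain ⟨y, hy⟩ := card_pos.1 (show 0 < #(M v) by omega)
    have hyF : y ∈ ({u, x} : Finset V) := by rw [hvF]; exact mem_insert_of_mem hy
    rw [mem_insert, mem_singleton] at hyF hv
    rcases hyF with rfl | rfl
    · exact hv (Or.inr (hone _ _ _ (hMsymm _ _ hy) hx))
    · exact hv (Or.inl (hone _ _ _ (hMsymm _ _ hy) (hMsymm _ _ hx)))
  · let S : Finset V := univ.filter fun u => #(M u) + 2 = k
    have hsub : powersetCard (k - 1) (univ : Finset V) ⊆
        S.biUnion fun u => (G.neighborFinset u).image fun w => insert w (M u) := by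
      intro F hF
      obtain ⟨u, -, w, huw, hc, rfl⟩ := hrep F (by rw [(mem_powersetCard.1 hF).2]; omega)
      exact mem_biUnion.2 ⟨u, by simp [S, hc], mem_image.2 ⟨w, by simpa using huw, rfl⟩⟩
    have hdeg : ∀ u ∈ S, #((G.neighborFinset u).image fun w => insert w (M u)) ≤ n - (k - 1) := by
      intro u hu
      refine card_image_le.trans ?_
      have hcu : #(M u) + 2 = k := (mem_filter.1 hu).2
      have hN : G.neighborFinset u ⊆ (insert u (M u))ᶜ := by
        intro w hw
        rw [SimpleGraph.mem_neighborFinset] at hw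
        rw [mem_compl, mem_insert, hM]
        rintro (h | h)
        · exact hw.ne h.symm
        · exact h.2 hw
      refine (card_le_card hN).trans ?_
      rw [card_compl, card_insert_of_notMem (by simp [hM])]
      omega
    have hcount := (card_le_card hsub).trans (card_biUnion_le_card_mul S _ _ hdeg)
    rw [card_powersetCard, card_univ, ← hnV] at hcount
    have hS : #S * (n - (k - 1)) ≤ n * (n - (k - 1)) := Nat.mul_le_mul_right _ S.card_le_univ
    have := mul_lt_choose (k - 1) (by omega) n (by omega) (by omega)
    omega

/-- **Corollary (Sperner's bound is not attained).** For a graph `G` of order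
`n ≥ 6`, the number of minimal forts is strictly less than `n.choose ⌊n/2⌋`. -/
theorem card_minimalForts_lt_sperner {V : Type*} [Fintype V]
    (G : SimpleGraph V) (hn : 6 ≤ Fintype.card V) :
    {F : Set V | IsMinimalFort G F}.ncard <
      (Fintype.card V).choose (Fintype.card V / 2) := by
  classical
  by_contra! hc
  let 𝒜 : Finset (Finset V) := univ.filter fun s => IsMinimalFort G (s : Set V)
  have hanti : IsAntichain (· ⊆ ·) (SetLike.coe 𝒜) := by
    intro s hs t ht hne hsub
    have hs' : IsMinimalFort G (s : Set V) := (mem_filter.1 hs).2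
    have ht' : IsMinimalFort G (t : Set V) := (mem_filter.1 ht).2
    exact ht'.2 _ (coe_ssubset.2 (ssubset_of_subset_of_ne hsub hne)) hs'.1
  have himg : {F : Set V | IsMinimalFort G F} = (fun s : Finset V => (s : Set V)) '' 𝒜 := by
    ext F
    constructor
    · intro hF
      exact ⟨F.toFinset, by simpa [𝒜] using hF, by simp⟩
    · rintro ⟨s, hs, rfl⟩
      exact (mem_filter.1 hs).2
  rw [himg, Set.ncard_image_of_injective _ coe_injective, Set.ncard_coe_finset] at hc
  obtain ⟨k, hk, hall⟩ := exists_layer_of_sperner_eq hanti hc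
  exact not_all_minimalFort G k hn hk fun s hs => (mem_filter.1 (hall s hs)).2
end

section
/- For every n ≥ 2, the complete graph K_n has exactly C(n,2) = n(n−1)/2 minimal forts. -/
/-!
In a complete graph on at least two vertices, a vertex `u ∉ F` is adjacent to every element of `F`,
so it has exactly one neighbor in `F` precisely when `F` is a singleton. As a singleton is not the
whole vertex set, the forts are exactly the sets with at least two elements
(`isFort_top_iff_nontrivial`). The minimal ones are then the two-element sets
(`isMinimalFort_top_iff_ncard`), of which there are `n.choose 2`.
-/

open SimpleGraph

theorem isFort_top_iff_nontrivial {V : Type*} [Nontrivial V] (F : Set V) :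
    IsFort (⊤ : SimpleGraph V) F ↔ F.Nontrivial := by
  constructor
  · rintro ⟨hne, hF⟩
    by_contra h
    obtain ⟨a, rfl⟩ := (Set.not_nontrivial_iff.1 h).eq_empty_or_singleton.resolve_left
      hne.ne_empty
    obtain ⟨u, hu⟩ := exists_ne a
    exact hF u (by simpa using hu) ⟨a, ⟨rfl, by simpa using hu⟩, fun w hw => hw.1⟩
  · intro h
    refine ⟨h.nonempty, ?_⟩
    rintro u hu ⟨w, -, huniq⟩
    obtain ⟨a, ha, b, hb, hab⟩ := h
    have key : ∀ x ∈ F, x = w := fun x hx =>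
      huniq x ⟨hx, by rintro rfl; exact hu hx⟩
    exact hab ((key a ha).trans (key b hb).symm)

theorem isMinimalFort_top_iff_ncard {V : Type*} [Nontrivial V] (F : Set V) :
    IsMinimalFort (⊤ : SimpleGraph V) F ↔ F.ncard = 2 := by
  simp only [IsMinimalFort, isFort_top_iff_nontrivial]
  constructor
  · rintro ⟨⟨a, ha, b, hb, hab⟩, hmin⟩
    have hsub : {a, b} ⊆ F := Set.pair_subset ha hb
    have heq : {a, b} = F := by
      by_contra hne
      exact hmin _ (hsub.ssubset_of_ne hne) (Set.nontrivial_pair hab)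
    rw [← heq, Set.ncard_pair hab]
  · intro h
    obtain ⟨a, b, hab, rfl⟩ := Set.ncard_eq_two.1 h
    refine ⟨Set.nontrivial_pair hab, fun F' hF' hnt => ?_⟩
    have : Finite F' := ((Set.toFinite {a, b}).subset hF'.subset).to_subtype
    have h1 : F'.ncard < 2 := h ▸ Set.ncard_lt_ncard hF' (Set.toFinite _)
    have h2 : 1 < F'.ncard := Set.one_lt_ncard_iff_nontrivial.2 hnt
    omega

/-- **Proposition.** The complete graph on `n ≥ 2` vertices has exactly
`n.choose 2` minimal forts. -/
theorem numMinimalForts_complete (n : ℕ) (hn : 2 ≤ n) :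
    numMinimalForts (⊤ : SimpleGraph (Fin n)) = n.choose 2 := by
  have : Nontrivial (Fin n) := Fin.nontrivial_iff_two_le.2 hn
  have hset : {F : Set (Fin n) | IsMinimalFort ⊤ F} =
      (fun s : Finset (Fin n) => (s : Set (Fin n))) ''
        (Finset.powersetCard 2 (Finset.univ : Finset (Fin n)) : Set (Finset (Fin n))) := by
    ext F
    simp only [Set.mem_ofPred_eq, isMinimalFort_top_iff_ncard, Set.mem_image, Finset.mem_coe,
      Finset.mem_powersetCard, Finset.subset_univ, true_and]
    constructor
    · intro h
      lift F to Finset (Fin n) using F.toFinite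
      exact ⟨F, by simpa using h, rfl⟩
    · rintro ⟨s, hs, rfl⟩
      simpa using hs
  rw [numMinimalForts, hset, Set.ncard_image_of_injective _ Finset.coe_injective,
    Set.ncard_coe_finset, Finset.card_powersetCard, Finset.card_univ, Fintype.card_fin]
end

section
/- For all p, q ≥ 1 with p + q ≥ 3, the complete bipartite graph K_{p,q} has exactly C(p,2) + C(q,2) minimal forts. -/
/-!
In `K_{p,q}` with both parts nonempty, two vertices of the same part form a fort: the vertices of
the other part see both of them, and the remaining vertices see neither. Conversely every fort
contains two vertices of the same part (`exists_pair_of_isFort`): otherwise it meets each part in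
at most one vertex, so meeting one part forces it to contain the whole other part, hence all
vertices, and `p + q ≥ 3` puts two of these in the same part. Hence the minimal forts are exactly
the two-element subsets of either part (`isMinimalFort_iff`).
-/

open SimpleGraph

section CompleteBipartite

variable {p q : ℕ}

lemma isFort_pair_inl {a b : Fin p} (hab : a ≠ b) :
    IsFort (completeBipartiteGraph (Fin p) (Fin q)) {Sum.inl a, Sum.inl b} := by
  refine ⟨⟨_, Set.mem_insert _ _⟩, ?_⟩
  rintro (u | u) hu ⟨w, ⟨hw, hadj⟩, huniq⟩
  · rcases hw with rfl | rfl <;> simp at hadj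
  · have h1 := huniq (Sum.inl a) (by simp)
    have h2 := huniq (Sum.inl b) (by simp)
    exact hab (Sum.inl_injective (h1.trans h2.symm))

lemma isFort_pair_inr {a b : Fin q} (hab : a ≠ b) :
    IsFort (completeBipartiteGraph (Fin p) (Fin q)) {Sum.inr a, Sum.inr b} := by
  refine ⟨⟨_, Set.mem_insert _ _⟩, ?_⟩
  rintro (u | u) hu ⟨w, ⟨hw, hadj⟩, huniq⟩
  · have h1 := huniq (Sum.inr a) (by simp)
    have h2 := huniq (Sum.inr b) (by simp)
    exact hab (Sum.inr_injective (h1.trans h2.symm))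
  · rcases hw with rfl | rfl <;> simp at hadj

/-- Every fort of `K_{p,q}` contains two distinct vertices of the same part. -/
lemma exists_pair_of_isFort (hp : 1 ≤ p) (hq : 1 ≤ q) (hpq : 3 ≤ p + q)
    {F : Set (Fin p ⊕ Fin q)} (hF : IsFort (completeBipartiteGraph (Fin p) (Fin q)) F) :
    (∃ a b : Fin p, a ≠ b ∧ Sum.inl a ∈ F ∧ Sum.inl b ∈ F) ∨
      (∃ a b : Fin q, a ≠ b ∧ Sum.inr a ∈ F ∧ Sum.inr b ∈ F) := by
  by_contra! hcon
  obtain ⟨hl, hr⟩ := hcon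
  obtain ⟨⟨v, hv⟩, hfort⟩ := hF
  have hl' : ∀ a b : Fin p, Sum.inl a ∈ F → Sum.inl b ∈ F → b = a := fun a b ha hb => by
    by_contra h
    exact hl a b (Ne.symm h) ha hb
  have hr' : ∀ a b : Fin q, Sum.inr a ∈ F → Sum.inr b ∈ F → b = a := fun a b ha hb => by
    by_contra h
    exact hr a b (Ne.symm h) ha hb
  -- As soon as `F` meets a part, the fort condition forces it to contain the whole other part.
  have hR : ∀ a : Fin p, Sum.inl a ∈ F → ∀ u : Fin q, Sum.inr u ∈ F := fun a ha u => by
    by_contra hu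
    refine hfort _ hu ⟨Sum.inl a, ⟨ha, by simp⟩, ?_⟩
    rintro (w | w) ⟨hw, hadj⟩
    · rw [hl' a w ha hw]
    · simp at hadj
  have hL : ∀ a : Fin q, Sum.inr a ∈ F → ∀ u : Fin p, Sum.inl u ∈ F := fun a ha u => by
    by_contra hu
    refine hfort _ hu ⟨Sum.inr a, ⟨ha, by simp⟩, ?_⟩
    rintro (w | w) ⟨hw, hadj⟩
    · simp at hadj
    · rw [hr' a w ha hw]
  have hall : (∀ u : Fin p, Sum.inl u ∈ F) ∧ ∀ u : Fin q, Sum.inr u ∈ F := by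
    rcases v with v | v
    · exact ⟨hL ⟨0, hq⟩ (hR v hv _), hR v hv⟩
    · exact ⟨hL v hv, hR ⟨0, hp⟩ (hL v hv _)⟩
  rcases (by omega : 2 ≤ p ∨ 2 ≤ q) with h | h
  · have := hl' ⟨0, by omega⟩ ⟨1, by omega⟩ (hall.1 _) (hall.1 _)
    simp at this
  · have := hr' ⟨0, by omega⟩ ⟨1, by omega⟩ (hall.2 _) (hall.2 _)
    simp at this

lemma isMinimalFort_iff (hp : 1 ≤ p) (hq : 1 ≤ q) (hpq : 3 ≤ p + q)
    (F : Set (Fin p ⊕ Fin q)) :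
    IsMinimalFort (completeBipartiteGraph (Fin p) (Fin q)) F ↔
      (∃ a b : Fin p, a ≠ b ∧ F = {Sum.inl a, Sum.inl b}) ∨
        (∃ a b : Fin q, a ≠ b ∧ F = {Sum.inr a, Sum.inr b}) := by
  constructor
  · rintro ⟨hF, hmin⟩
    rcases exists_pair_of_isFort hp hq hpq hF with ⟨a, b, hab, ha, hb⟩ | ⟨a, b, hab, ha, hb⟩
    · refine Or.inl ⟨a, b, hab, ?_⟩
      by_contra hne
      exact hmin _ ((Set.pair_subset ha hb).ssubset_of_ne (Ne.symm hne)) (isFort_pair_inl hab)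
    · refine Or.inr ⟨a, b, hab, ?_⟩
      by_contra hne
      exact hmin _ ((Set.pair_subset ha hb).ssubset_of_ne (Ne.symm hne)) (isFort_pair_inr hab)
  · rintro (⟨a, b, hab, rfl⟩ | ⟨a, b, hab, rfl⟩)
    · refine ⟨isFort_pair_inl hab, fun F' hF' hfort => hF'.2 ?_⟩
      rcases exists_pair_of_isFort hp hq hpq hfort with ⟨c, d, hcd, hc, hd⟩ | ⟨c, d, hcd, hc, hd⟩
      · have h1 := hF'.1 hc
        have h2 := hF'.1 hd
        simp only [Set.mem_insert_iff, Set.mem_singleton_iff, Sum.inl.injEq] at h1 h2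
        apply Set.pair_subset <;> grind
      · simpa using hF'.1 hc
    · refine ⟨isFort_pair_inr hab, fun F' hF' hfort => hF'.2 ?_⟩
      rcases exists_pair_of_isFort hp hq hpq hfort with ⟨c, d, hcd, hc, hd⟩ | ⟨c, d, hcd, hc, hd⟩
      · simpa using hF'.1 hc
      · have h1 := hF'.1 hc
        have h2 := hF'.1 hd
        simp only [Set.mem_insert_iff, Set.mem_singleton_iff, Sum.inr.injEq] at h1 h2
        apply Set.pair_subset <;> grind

/-- An injection carries the two-element subsets of `Fin n` to `n.choose 2` distinct sets. -/
lemma ncard_image_pairs {α : Type*} {n : ℕ} {f : Fin n → α} (hf : Function.Injective f) :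
    {F : Set α | ∃ a b : Fin n, a ≠ b ∧ F = {f a, f b}}.ncard = n.choose 2 := by
  have h : {F : Set α | ∃ a b : Fin n, a ≠ b ∧ F = {f a, f b}} =
      Set.image (fun s : Finset (Fin n) => Set.image f s)
        (Finset.powersetCard 2 Finset.univ : Finset (Finset (Fin n))) := by
    ext F
    simp only [Set.mem_ofPred_eq, Set.mem_image, Finset.mem_coe, Finset.mem_powersetCard_univ,
      Finset.card_eq_two]
    constructor
    · rintro ⟨a, b, hab, rfl⟩
      exact ⟨{a, b}, ⟨a, b, hab, rfl⟩, by simp [Set.image_pair]⟩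
    · rintro ⟨_, ⟨a, b, hab, rfl⟩, rfl⟩
      exact ⟨a, b, hab, by simp [Set.image_pair]⟩
  have hinj : Function.Injective fun s : Finset (Fin n) => Set.image f s :=
    hf.image_injective.comp Finset.coe_injective
  rw [h, Set.ncard_image_of_injective _ hinj,
    Set.ncard_coe_finset, Finset.card_powersetCard, Finset.card_univ, Fintype.card_fin]

end CompleteBipartite

/-- **Proposition.** For `p, q ≥ 1` with `p + q ≥ 3`, the complete bipartite
graph `K_{p,q}` has exactly `p.choose 2 + q.choose 2` minimal forts. -/
theorem numMinimalForts_completeBipartite (p q : ℕ) (hp : 1 ≤ p) (hq : 1 ≤ q)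
    (hpq : 3 ≤ p + q) :
    numMinimalForts (completeBipartiteGraph (Fin p) (Fin q)) =
      p.choose 2 + q.choose 2 := by
  have hset : {F | IsMinimalFort (completeBipartiteGraph (Fin p) (Fin q)) F} =
      {F | ∃ a b : Fin p, a ≠ b ∧ F = {Sum.inl a, Sum.inl b}} ∪
        {F | ∃ a b : Fin q, a ≠ b ∧ F = {Sum.inr a, Sum.inr b}} :=
    Set.ext (isMinimalFort_iff hp hq hpq)
  rw [numMinimalForts, hset, Set.ncard_union_eq ?_ (Set.toFinite _) (Set.toFinite _),
    ncard_image_pairs Sum.inl_injective, ncard_image_pairs Sum.inr_injective]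
  rw [Set.disjoint_left]
  rintro _ ⟨a, b, -, rfl⟩ ⟨c, d, -, h⟩
  have hmem : (Sum.inl a : Fin p ⊕ Fin q) ∈ ({Sum.inr c, Sum.inr d} : Set (Fin p ⊕ Fin q)) :=
    h ▸ Set.mem_insert _ _
  simp at hmem
end

section
/- Let G be a finite simple graph with vertex set V. Then F ⊆ V is a minimal fort of G if and only if S = V∖F is a maximal failed zero forcing set of G. -/
/-!
The complement of the set of vertices coloured by the zero forcing process is a fort when it is
nonempty, and a fort disjoint from the initial set is never entered by the process. Hence `S` fails
to be zero forcing exactly when some fort is disjoint from `S` (`isFailedZFSet_iff_exists_isFort`).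
Applied to `Fᶜ` and to `insert w Fᶜ`, this says that `Fᶜ` is a maximal failed set iff `F` contains
a fort but no fort inside `F` misses a vertex of `F`, that is, iff `F` is a minimal fort.
-/

open SimpleGraph

/-- The set of vertices eventually colored gray by the zero forcing process
started from the gray set `S`: a gray vertex `u` forces its neighbor `w`
whenever `w` is the only non-gray neighbor of `u`. -/
inductive ZFClosure {V : Type*} (G : SimpleGraph V) (S : Set V) : V → Prop
  | init (v : V) (h : v ∈ S) : ZFClosure G S v
  | force (u w : V) (hu : ZFClosure G S u) (hw : G.Adj u w)
      (h : ∀ x, G.Adj u x → x ≠ w → ZFClosure G S x) : ZFClosure G S w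

/-- `S` is a zero forcing set if every vertex is eventually colored gray. -/
def IsZeroForcingSet {V : Type*} (G : SimpleGraph V) (S : Set V) : Prop :=
  ∀ v, ZFClosure G S v

/-- A failed zero forcing set is one that is not a zero forcing set. -/
def IsFailedZFSet {V : Type*} (G : SimpleGraph V) (S : Set V) : Prop :=
  ¬ IsZeroForcingSet G S

/-- A failed zero forcing set is maximal if adding any vertex outside of it
produces a zero forcing set. -/
def IsMaximalFailedZFSet {V : Type*} (G : SimpleGraph V) (S : Set V) : Prop :=
  IsFailedZFSet G S ∧ ∀ w ∉ S, IsZeroForcingSet G (insert w S)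

/-- A fort acts as a barrier: a gray vertex outside `F` adjacent to a vertex of `F` has a second
neighbor in `F`, so it can never force into `F`. -/
theorem ZFClosure.notMem_of_isFort {V : Type*} {G : SimpleGraph V} {S F : Set V}
    (hF : IsFort G F) (hSF : Disjoint S F) {v : V} (hv : ZFClosure G S v) : v ∉ F := by
  induction hv with
  | init v h => exact Set.disjoint_left.mp hSF h
  | force u w _ hw _ ihu ih =>
    intro hwF
    refine hF.2 u ihu ⟨w, ⟨hwF, hw⟩, fun x hx => ?_⟩
    by_contra hne
    exact ih x hx.2 hne hx.1

theorem isFort_compl_zfClosure {V : Type*} {G : SimpleGraph V} {S : Set V}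
    (hS : IsFailedZFSet G S) : IsFort G {v | ¬ ZFClosure G S v} := by
  refine ⟨not_forall.mp hS, ?_⟩
  rintro u hu ⟨w, ⟨hw, hadj⟩, huniq⟩
  refine hw (.force u w (not_not.mp hu) hadj fun x hx hne => ?_)
  by_contra hxS
  exact hne (huniq x ⟨hxS, hx⟩)

theorem isFailedZFSet_iff_exists_isFort {V : Type*} {G : SimpleGraph V} {S : Set V} :
    IsFailedZFSet G S ↔ ∃ F, IsFort G F ∧ Disjoint S F := by
  constructor
  · intro hS
    exact ⟨_, isFort_compl_zfClosure hS, Set.disjoint_left.mpr fun v hv h => h (.init v hv)⟩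
  · rintro ⟨F, hF, hSF⟩ hS
    obtain ⟨v, hv⟩ := hF.1
    exact (hS v).notMem_of_isFort hF hSF hv

/-- **Theorem.** `F` is a minimal fort of `G` if and only if its complement
`V ∖ F` is a maximal failed zero forcing set of `G`. -/
theorem isMinimalFort_iff_compl_isMaximalFailedZFSet {V : Type*} [Fintype V]
    (G : SimpleGraph V) (F : Set V) :
    IsMinimalFort G F ↔ IsMaximalFailedZFSet G Fᶜ := by
  constructor
  · rintro ⟨hF, hmin⟩
    refine ⟨isFailedZFSet_iff_exists_isFort.mpr ⟨F, hF, disjoint_compl_left⟩, fun w hw => ?_⟩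
    by_contra hfail
    obtain ⟨F', hF', hd⟩ := isFailedZFSet_iff_exists_isFort.mp hfail
    rw [Set.disjoint_insert_left, Set.disjoint_compl_left_iff_subset] at hd
    exact hmin F' ⟨hd.2, fun h => hd.1 (h (not_not.mp hw))⟩ hF'
  · rintro ⟨hfail, hmax⟩
    have hno : ∀ F' ⊂ F, ¬ IsFort G F' := by
      intro F' hss hF'
      obtain ⟨w, hwF, hwF'⟩ := Set.exists_of_ssubset hss
      refine isFailedZFSet_iff_exists_isFort.mpr ⟨F', hF', ?_⟩ (hmax w (not_not.mpr hwF))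
      rw [Set.disjoint_insert_left, Set.disjoint_compl_left_iff_subset]
      exact ⟨hwF', hss.1⟩
    obtain ⟨F', hF', hd⟩ := isFailedZFSet_iff_exists_isFort.mp hfail
    rw [Set.disjoint_compl_left_iff_subset] at hd
    -- The fort witnessing failure lies in `F`, and cannot be proper, so it is `F` itself.
    obtain rfl | hss := hd.eq_or_ssubset
    · exact ⟨hF', hno⟩
    · exact absurd hF' (hno F' hss)
end

section
/- For n ≥ 6, the number of minimal forts of the cycle graph C_n satisfies the recurrence |𝓕_{C_n}| = |𝓕_{C_{n−2}}| + |𝓕_{C_{n−3}}|, with initial values |𝓕_{C_3}| = 3, |𝓕_{C_4}| = 2, and |𝓕_{C_5}| = 5. -/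
/-!
A set of vertices of `C_n` (`n ≥ 3`) is a fort exactly when it is a vertex cover: two consecutive
missing vertices force the next one to be missing too, hence all of them. A vertex cover is
minimal exactly when it contains no three consecutive vertices. So minimal forts are cyclic binary
words of length `n` avoiding the factors `00` and `111` (`isMinimalFort_cycleGraph_iff`).

Recording consecutive pairs of letters turns such words into closed walks of length `n` in a fixed
digraph on `Bool × Bool`, so their number is the trace of the `n`-th power of its adjacency matrix
`transfer` (`numMinimalForts_cycleGraph`). The recurrence comes from the matrix identity
`transfer ^ 4 = transfer ^ 2 + transfer`, and the initial values are explicit traces.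
-/

open SimpleGraph

/-! ### Minimal forts of a cycle as cyclic words -/

lemma fin_two_ne_zero (n : ℕ) : (1 + 1 : Fin (n + 3)) ≠ 0 := by
  rw [Ne, Fin.ext_iff, Fin.val_add]
  simp [Nat.mod_eq_of_lt (show 2 < n + 3 by omega)]

lemma cycleGraph_adj_iff (n : ℕ) (u w : Fin (n + 3)) :
    (cycleGraph (n + 3)).Adj u w ↔ w = u + 1 ∨ w = u - 1 := by
  rw [cycleGraph_adj]
  constructor
  · rintro (h | h)
    · right; rw [← h]; abel
    · left; rw [← h]; abel
  · rintro (h | h)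
    · right; rw [h]; abel
    · left; rw [h]; abel

open Fin.CommRing in
/-- Forts of a cycle are its vertex covers. -/
lemma isFort_cycleGraph_iff (n : ℕ) (F : Set (Fin (n + 3))) :
    IsFort (cycleGraph (n + 3)) F ↔ ∀ i, i ∈ F ∨ i + 1 ∈ F := by
  constructor
  · rintro ⟨⟨x, hx⟩, hF⟩ i
    by_contra! hi
    have step : ∀ j, j ∉ F → j + 1 ∉ F → j + 1 + 1 ∉ F := by
      intro j h0 h1 h2
      refine hF (j + 1) h1 ⟨j + 1 + 1, ⟨h2, (cycleGraph_adj_iff _ _ _).2 (Or.inl rfl)⟩, ?_⟩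
      rintro y ⟨hy, hadj⟩
      rcases (cycleGraph_adj_iff _ _ _).1 hadj with h | h
      · exact h
      · rw [add_sub_cancel_right] at h
        exact absurd (h ▸ hy) h0
    have all : ∀ k : ℕ, i + (k : Fin (n + 3)) ∉ F ∧ i + (k : Fin (n + 3)) + 1 ∉ F := by
      intro k
      induction k with
      | zero => simpa using hi
      | succ k ih =>
        have := step _ ih.1 ih.2
        push_cast
        rw [← add_assoc]
        exact ⟨ih.2, this⟩
    apply (all (x - i).val).1
    rw [Fin.cast_val_eq_self]
    simpa using hx
  · intro h
    refine ⟨?_, ?_⟩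
    · rcases h 0 with h | h
      exacts [⟨_, h⟩, ⟨_, h⟩]
    · rintro u hu ⟨w, -, huniq⟩
      have h1 : u + 1 ∈ F := (h u).resolve_left hu
      have h2 : u - 1 ∈ F := (h (u - 1)).resolve_right (by simpa using hu)
      have e1 := huniq _ ⟨h1, (cycleGraph_adj_iff _ _ _).2 (Or.inl rfl)⟩
      have e2 := huniq _ ⟨h2, (cycleGraph_adj_iff _ _ _).2 (Or.inr rfl)⟩
      have e : u + 1 = u - 1 := e1.trans e2.symm
      apply fin_two_ne_zero n
      calc (1 + 1 : Fin (n + 3)) = (u + 1) - (u - 1) := by abel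
        _ = 0 := by rw [e, sub_self]

/-- Minimal forts of a cycle are the vertex sets whose indicator word avoids `00` and `111`. -/
lemma isMinimalFort_cycleGraph_iff (n : ℕ) (F : Set (Fin (n + 3))) :
    IsMinimalFort (cycleGraph (n + 3)) F ↔
      ∀ i, (i ∈ F ∨ i + 1 ∈ F) ∧ ¬ (i ∈ F ∧ i + 1 ∈ F ∧ i + 1 + 1 ∈ F) := by
  unfold IsMinimalFort
  simp only [isFort_cycleGraph_iff]
  constructor
  · rintro ⟨hF, hmin⟩ i
    refine ⟨hF i, ?_⟩
    rintro ⟨h0, h1, h2⟩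
    -- The middle vertex of three consecutive ones can be dropped from the cover.
    refine hmin (F \ {i + 1}) (Set.sdiff_singleton_ssubset.2 h1) fun j => ?_
    simp only [Set.mem_sdiff, Set.mem_singleton_iff]
    by_cases hj : j = i + 1
    · subst hj
      exact Or.inr ⟨h2, by simp⟩
    · by_cases hj' : j = i
      · subst hj'
        exact Or.inl ⟨h0, hj⟩
      · rcases hF j with h | h
        · exact Or.inl ⟨h, hj⟩
        · exact Or.inr ⟨h, fun e => hj' (add_right_cancel e)⟩
  · intro h
    refine ⟨fun i => (h i).1, fun F' hF' hc => ?_⟩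
    obtain ⟨x, hx, hx'⟩ := Set.exists_of_ssubset hF'
    have h1 : x + 1 ∈ F := hF'.1 ((hc x).resolve_left hx')
    have h2 : x - 1 ∈ F := hF'.1 ((hc (x - 1)).resolve_right (by simpa using hx'))
    exact (h (x - 1)).2 ⟨h2, by simpa using hx, by simpa using h1⟩

/-! ### Closed walks and traces -/

/-- Entries of matrix powers as weighted sums over walks with a prescribed start. -/
lemma matrix_pow_succ_apply {S : Type*} [Fintype S] [DecidableEq S] (A : Matrix S S ℕ) (n : ℕ) :
    ∀ s t, (A ^ (n + 1)) s t =
      ∑ w : Fin n → S, (∏ i : Fin n, A ((Fin.cons s w : Fin (n + 1) → S) i.castSucc)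
        ((Fin.cons s w : Fin (n + 1) → S) i.succ)) *
          A ((Fin.cons s w : Fin (n + 1) → S) (Fin.last n)) t := by
  induction n with
  | zero => intro s t; simp
  | succ n ih =>
    intro s t
    rw [pow_succ', Matrix.mul_apply, ← (Fin.consEquiv fun _ : Fin (n + 1) => S).sum_comp,
      Fintype.sum_prod_type]
    refine Finset.sum_congr rfl fun u _ => ?_
    rw [ih, Finset.mul_sum]
    refine Finset.sum_congr rfl fun w _ => ?_
    rw [Fin.prod_univ_succ, ← mul_assoc]
    simp [Fin.consEquiv, ← Fin.succ_last]

/-- The trace of a matrix power as a weighted sum over closed walks, indexed cyclically. -/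
lemma matrix_trace_pow {S : Type*} [Fintype S] [DecidableEq S] (A : Matrix S S ℕ) (n : ℕ) :
    (A ^ (n + 1)).trace = ∑ w : Fin (n + 1) → S, ∏ i, A (w i) (w (i + 1)) := by
  rw [← (Fin.consEquiv fun _ : Fin (n + 1) => S).sum_comp, Fintype.sum_prod_type, Matrix.trace]
  refine Finset.sum_congr rfl fun s _ => ?_
  rw [Matrix.diag_apply, matrix_pow_succ_apply]
  refine Finset.sum_congr rfl fun w _ => ?_
  rw [Fin.prod_univ_castSucc]
  simp [Fin.consEquiv]

/-- A step between overlapping pairs of letters `(a, b) → (b, c)` for which the factor `abc`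
contains no `00` at its start and is not `111`. -/
def Step (p q : Bool × Bool) : Prop :=
  p.2 = q.1 ∧ (p.1 = true ∨ p.2 = true) ∧ ¬ (p.1 = true ∧ p.2 = true ∧ q.2 = true)

instance : DecidableRel Step := fun p q => by unfold Step; infer_instance

/-- The adjacency matrix of the digraph `Step`. -/
def transfer : Matrix (Bool × Bool) (Bool × Bool) ℕ := fun p q => if Step p q then 1 else 0

lemma transfer_pow_four : transfer ^ 4 = transfer ^ 2 + transfer := by
  simp only [pow_succ, pow_zero, one_mul]
  ext ⟨a, b⟩ ⟨c, d⟩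
  revert a b c d
  decide

lemma numMinimalForts_cycleGraph (n : ℕ) :
    numMinimalForts (cycleGraph (n + 3)) = (transfer ^ (n + 3)).trace := by
  classical
  rw [matrix_trace_pow]
  simp only [transfer, Finset.prod_ite_zero, Finset.prod_const_one, Finset.mem_univ,
    forall_true_left]
  rw [Finset.sum_boole, Nat.cast_id, ← Set.ncard_coe_finset, numMinimalForts]
  refine Set.ncard_congr (fun F _ i => (decide (i ∈ F), decide (i + 1 ∈ F))) ?_ ?_ ?_
  · intro F hF
    have := (isMinimalFort_cycleGraph_iff n F).1 hF
    simpa [Step] using this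
  · intro F F' _ _ h
    ext i
    have := congrArg Prod.fst (congrFun h i)
    simpa using this
  · intro w hw
    have hw' : ∀ i, Step (w i) (w (i + 1)) := by simpa using hw
    refine ⟨{i | (w i).1 = true}, ?_, ?_⟩
    · refine (isMinimalFort_cycleGraph_iff n _).2 fun i => ?_
      have h1 := hw' i
      have h2 := hw' (i + 1)
      unfold Step at h1 h2
      simp only [Set.mem_ofPred_eq]
      rw [← h2.1, ← h1.1]
      exact h1.2
    · funext i
      have h1 := (hw' i).1
      ext <;> simp [h1]

/-- **Corollary (cycle recurrence).** For `n ≥ 6`, the number of minimal forts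
of the cycle graph satisfies `|𝓕_{C_n}| = |𝓕_{C_{n-2}}| + |𝓕_{C_{n-3}}|`,
with initial values `|𝓕_{C_3}| = 3`, `|𝓕_{C_4}| = 2`, `|𝓕_{C_5}| = 5`. -/
theorem numMinimalForts_cycle_recurrence :
    (∀ n : ℕ, 6 ≤ n →
      numMinimalForts (SimpleGraph.cycleGraph n) =
        numMinimalForts (SimpleGraph.cycleGraph (n - 2)) +
          numMinimalForts (SimpleGraph.cycleGraph (n - 3))) ∧
    numMinimalForts (SimpleGraph.cycleGraph 3) = 3 ∧
    numMinimalForts (SimpleGraph.cycleGraph 4) = 2 ∧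
    numMinimalForts (SimpleGraph.cycleGraph 5) = 5 := by
  refine ⟨fun n hn => ?_, ?_, ?_, ?_⟩
  · obtain ⟨m, rfl⟩ := Nat.exists_eq_add_of_le' hn
    have e2 : m + 6 - 2 = m + 1 + 3 := by omega
    have e3 : m + 6 - 3 = m + 3 := by omega
    have e : m + 6 = m + 3 + 3 := rfl
    rw [e2, e3, e, numMinimalForts_cycleGraph, numMinimalForts_cycleGraph,
      numMinimalForts_cycleGraph, ← Matrix.trace_add]
    congr 1
    calc transfer ^ (m + 3 + 3) = transfer ^ (m + 2) * transfer ^ 4 := by rw [← pow_add]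
      _ = transfer ^ (m + 1 + 3) + transfer ^ (m + 3) := by
        rw [transfer_pow_four, mul_add, ← pow_add, ← pow_succ]
  · rw [numMinimalForts_cycleGraph 0]
    simp only [pow_succ, pow_zero, one_mul]
    decide
  · rw [numMinimalForts_cycleGraph 1]
    simp only [pow_succ, pow_zero, one_mul]
    decide
  · rw [numMinimalForts_cycleGraph 2]
    simp only [pow_succ, pow_zero, one_mul]
    decide
end

section
/- For n ≥ 4, the number of minimal forts of the path graph P_n satisfies the recurrence |𝓕_{P_n}| = |𝓕_{P_{n−2}}| + |𝓕_{P_{n−3}}|, with initial values |𝓕_{P_1}| = 1, |𝓕_{P_2}| = 1, and |𝓕_{P_3}| = 1. -/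
open SimpleGraph

/-- Membership form of being a fort of the path on `0, …, m`, for a set of natural numbers. -/
def PathCover (m : ℕ) (S : Set ℕ) : Prop :=
  (∀ x ∈ S, x ≤ m) ∧ 0 ∈ S ∧ m ∈ S ∧ ∀ i < m, i ∈ S ∨ i + 1 ∈ S

/-- Membership form of being a minimal fort of the path on `0, …, m`: no two consecutive vertices
are missing and no three consecutive vertices are present. -/
def PathSpread (m : ℕ) (S : Set ℕ) : Prop :=
  PathCover m S ∧ ∀ i, ¬ (i ∈ S ∧ i + 1 ∈ S ∧ i + 2 ∈ S)

lemma isFort_iff_val (m : ℕ) (F : Set (Fin (m + 1))) :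
    IsFort (pathGraph (m + 1)) F ↔ (Fin.val '' F).Nonempty ∧
      ∀ u ≤ m, u ∉ Fin.val '' F →
        ¬ ∃! w, w ∈ Fin.val '' F ∧ (u + 1 = w ∨ w + 1 = u) := by
  unfold IsFort
  rw [Set.image_nonempty]
  refine and_congr_right fun _ => ⟨fun h u hu huF => ?_, fun h u huF => ?_⟩
  · rintro ⟨_, ⟨⟨w, hw, rfl⟩, hadj⟩, huniq⟩
    refine h ⟨u, by omega⟩ (fun hh => huF ⟨_, hh, rfl⟩) ⟨w, ⟨hw, ?_⟩, ?_⟩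
    · simpa [pathGraph_adj] using hadj
    · rintro y ⟨hy, hyadj⟩
      exact Fin.ext (huniq y.val ⟨⟨y, hy, rfl⟩, by simpa [pathGraph_adj] using hyadj⟩)
  · rintro ⟨w, ⟨hw, hadj⟩, huniq⟩
    refine h u.val (by omega) ?_ ⟨w.val, ⟨⟨w, hw, rfl⟩, by simpa [pathGraph_adj] using hadj⟩, ?_⟩
    · rintro ⟨v, hv, hvu⟩
      exact huF (Fin.ext hvu ▸ hv)
    · rintro _ ⟨⟨y, hy, rfl⟩, hyadj⟩
      exact congrArg Fin.val (huniq y ⟨hy, by simpa [pathGraph_adj] using hyadj⟩)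

lemma isFort_iff (m : ℕ) (F : Set (Fin (m + 1))) :
    IsFort (pathGraph (m + 1)) F ↔ PathCover m (Fin.val '' F) := by
  have hle : ∀ x ∈ Fin.val '' F, x ≤ m := by
    rintro _ ⟨x, _, rfl⟩
    omega
  rw [isFort_iff_val]
  generalize Fin.val '' F = S at *
  constructor
  · rintro ⟨⟨a, ha⟩, h⟩
    -- Two consecutive missing vertices propagate to the right and to the left.
    have up : ∀ i, i ∉ S → i + 1 ∉ S → ∀ k, i + k ∉ S ∧ i + k + 1 ∉ S := by
      intro i h0 h1 k
      induction k with
      | zero => exact ⟨h0, h1⟩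
      | succ k ih =>
        refine ⟨ih.2, fun h2 => ?_⟩
        have := hle _ h2
        refine h (i + k + 1) (by omega) ih.2 ⟨_, ⟨h2, Or.inl (by omega)⟩, ?_⟩
        rintro y ⟨hy, hy' | hy'⟩
        · omega
        · exact absurd (by rwa [show y = i + k by omega] at hy) ih.1
    have down : ∀ i ≤ m, i ∉ S → i + 1 ∉ S → ∀ k ≤ i, k ∉ S := by
      intro i
      induction i with
      | zero =>
        intro _ h0 _ k hk
        rwa [show k = 0 by omega]
      | succ i ih =>
        intro him h0 h1 k hk
        have hi : i ∉ S := by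
          intro hi
          refine h (i + 1) him h0 ⟨i, ⟨hi, Or.inr rfl⟩, ?_⟩
          rintro y ⟨hy, hy' | hy'⟩
          · exact absurd (hy' ▸ hy) h1
          · omega
        rcases Nat.lt_or_ge i k with hk' | hk'
        · rwa [show k = i + 1 by omega]
        · exact ih (by omega) hi h0 k hk'
    refine ⟨hle, ?_, ?_, ?_⟩
    · by_contra h0
      have h1 : 0 + 1 ∉ S := by
        intro h1
        refine h 0 (by omega) h0 ⟨_, ⟨h1, Or.inl rfl⟩, ?_⟩
        rintro y ⟨_, hy' | hy'⟩ <;> omega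
      exact (up 0 h0 h1 a).1 (by simpa using ha)
    · by_contra hm
      exact down m le_rfl hm (fun hh => by have := hle _ hh; omega) a (hle a ha) ha
    · intro i hi
      by_contra! hc
      rcases Nat.le_total a i with hai | hai
      · exact down i hi.le hc.1 hc.2 a hai ha
      · exact (up i hc.1 hc.2 (a - i)).1 (by rwa [Nat.add_sub_cancel' hai])
  · rintro ⟨_, h0, hm, hcov⟩
    refine ⟨⟨0, h0⟩, fun u hu huS => ?_⟩
    rintro ⟨w, _, huniq⟩
    -- A missing vertex is interior, and both of its neighbours are present.
    have hu0 : u ≠ 0 := fun e => huS (e ▸ h0)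
    have hum : u ≠ m := fun e => huS (e ▸ hm)
    have hr : u + 1 ∈ S := (hcov u (by omega)).resolve_left huS
    have hl : u - 1 ∈ S := (hcov (u - 1) (by omega)).resolve_right
      (by rwa [Nat.sub_add_cancel (by omega)])
    have e1 := huniq _ ⟨hr, Or.inl rfl⟩
    have e2 := huniq _ ⟨hl, Or.inr (by omega)⟩
    omega

lemma isMinimalFort_iff_s8 (m : ℕ) (F : Set (Fin (m + 1))) :
    IsMinimalFort (pathGraph (m + 1)) F ↔ PathSpread m (Fin.val '' F) := by
  unfold IsMinimalFort PathSpread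
  rw [isFort_iff]
  refine and_congr_right fun hF => ⟨?_, ?_⟩
  · rintro hmin i ⟨h0, ⟨x, hx, hxi⟩, h2⟩
    have hmem : ∀ y, y ∈ Fin.val '' (F \ {x}) ↔ y ∈ Fin.val '' F ∧ y ≠ i + 1 := by
      intro y
      rw [Set.image_sdiff Fin.val_injective, Set.image_singleton, hxi]
      rfl
    refine hmin (F \ {x}) (Set.sdiff_singleton_ssubset.2 hx) ((isFort_iff m _).2 ?_)
    obtain ⟨hle, hz, hm, hcov⟩ := hF
    have := hle _ h2
    refine ⟨fun y hy => hle y ((hmem y).1 hy).1, (hmem _).2 ⟨hz, by omega⟩,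
      (hmem _).2 ⟨hm, by omega⟩, fun j hj => ?_⟩
    rw [hmem, hmem]
    rcases eq_or_ne j i with rfl | hji
    · exact Or.inl ⟨h0, by omega⟩
    rcases eq_or_ne j (i + 1) with rfl | hji'
    · exact Or.inr ⟨h2, by omega⟩
    · exact (hcov j hj).imp (⟨·, by omega⟩) (⟨·, by omega⟩)
  · rintro hno F' hss hF'
    obtain ⟨hsub, x, hx, hx'⟩ := (Set.ssubset_iff_exists).1 hss
    obtain ⟨-, hz, hm, hcov⟩ := (isFort_iff m F').1 hF'
    have hxS : x.val ∉ Fin.val '' F' := by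
      rwa [Fin.val_injective.mem_set_image]
    have hx0 : x.val ≠ 0 := fun e => hxS (e ▸ hz)
    have hxm : x.val ≠ m := fun e => hxS (by rwa [e])
    have hr := (hcov x.val (by omega)).resolve_left hxS
    have hl := (hcov (x.val - 1) (by omega)).resolve_right
      (by rwa [Nat.sub_add_cancel (by omega)])
    refine hno (x.val - 1) ⟨Set.image_mono hsub hl, ?_, ?_⟩
    · rw [Nat.sub_add_cancel (by omega)]
      exact ⟨x, hx, rfl⟩
    · rw [show x.val - 1 + 2 = x.val + 1 by omega]
      exact Set.image_mono hsub hr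

lemma numMinimalForts_eq (m : ℕ) :
    numMinimalForts (pathGraph (m + 1)) = {S | PathSpread m S}.ncard := by
  unfold numMinimalForts
  rw [← Set.ncard_image_of_injective _ (Set.image_injective.2 (Fin.val_injective (n := m + 1)))]
  congr 1
  ext S
  constructor
  · rintro ⟨F, hF, rfl⟩
    exact (isMinimalFort_iff_s8 m F).1 hF
  · intro hS
    have e : Fin.val '' ((Fin.val : Fin (m + 1) → ℕ) ⁻¹' S) = S := by
      rw [Set.image_preimage_eq_iff]
      intro x hx
      exact ⟨⟨x, Nat.lt_succ_of_le (hS.1.1 x hx)⟩, rfl⟩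
    exact ⟨_, (isMinimalFort_iff_s8 m _).2 (by rwa [e]), e⟩

lemma finite_spread (m : ℕ) : {S | PathSpread m S}.Finite :=
  (Set.finite_Iic m).finite_subsets.subset fun _ hS => hS.1.1

lemma spread_insert_one {m : ℕ} {S : Set ℕ} (hS : PathSpread (m + 1) S) :
    PathSpread (m + 3) (insert (m + 3) S) := by
  obtain ⟨⟨hle, hz, hm, hcov⟩, hno⟩ := hS
  refine ⟨⟨?_, ?_, ?_, ?_⟩, ?_⟩ <;> simp only [Set.mem_insert_iff]
  all_goals grind

lemma spread_insert_two {m : ℕ} {S : Set ℕ} (hS : PathSpread m S) :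
    PathSpread (m + 3) (insert (m + 2) (insert (m + 3) S)) := by
  obtain ⟨⟨hle, hz, hm, hcov⟩, hno⟩ := hS
  refine ⟨⟨?_, ?_, ?_, ?_⟩, ?_⟩ <;> simp only [Set.mem_insert_iff]
  all_goals grind

lemma spread_add_three (m : ℕ) :
    {S | PathSpread (m + 3) S} =
      (insert (m + 3)) '' {S | PathSpread (m + 1) S} ∪
        (fun S => insert (m + 2) (insert (m + 3) S)) '' {S | PathSpread m S} := by
  ext S
  constructor
  · rintro ⟨⟨hle, hz, hm, hcov⟩, hno⟩
    by_cases h2 : m + 2 ∈ S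
    · right
      have h1 : m + 1 ∉ S := fun h => hno _ ⟨h, h2, hm⟩
      refine ⟨S \ {m + 2, m + 3}, ⟨⟨?_, ?_, ?_, ?_⟩, ?_⟩, ?_⟩
      case refine_6 => ext x; simp; grind
      all_goals simp only [Set.mem_sdiff, Set.mem_insert_iff, Set.mem_singleton_iff]
      all_goals grind
    · left
      refine ⟨S \ {m + 3}, ⟨⟨?_, ?_, ?_, ?_⟩, ?_⟩, ?_⟩
      case refine_6 => ext x; simp; grind
      all_goals simp only [Set.mem_sdiff, Set.mem_singleton_iff]
      all_goals grind
  · rintro (⟨T, hT, rfl⟩ | ⟨T, hT, rfl⟩)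
    · exact spread_insert_one hT
    · exact spread_insert_two hT

lemma ncard_spread_add_three (m : ℕ) :
    {S | PathSpread (m + 3) S}.ncard =
      {S | PathSpread (m + 1) S}.ncard + {S | PathSpread m S}.ncard := by
  rw [spread_add_three, Set.ncard_union_eq ?_ ((finite_spread _).image _)
    ((finite_spread _).image _), Set.InjOn.ncard_image, Set.InjOn.ncard_image]
  · intro S hS T hT hST
    have h1 := hS.1.1
    have h2 := hT.1.1
    ext x
    have := Set.ext_iff.1 hST x
    simp only [Set.mem_insert_iff] at this
    grind
  · intro S hS T hT hST
    have h1 := hS.1.1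
    have h2 := hT.1.1
    ext x
    have := Set.ext_iff.1 hST x
    simp only [Set.mem_insert_iff] at this
    grind
  -- The two families differ in whether `m + 2` is present.
  · rw [Set.disjoint_left]
    rintro _ ⟨S, hS, rfl⟩ ⟨T, -, hST⟩
    have h2 : m + 2 ∈ insert (m + 3) S := hST ▸ Set.mem_insert _ _
    rcases h2 with h2 | h2
    · omega
    · have := hS.1.1 _ h2
      omega

lemma spread_zero : {S | PathSpread 0 S} = {{0}} := by
  ext S
  simp only [Set.mem_ofPred_eq, Set.mem_singleton_iff]
  constructor
  · rintro ⟨⟨hle, hz, hm, hcov⟩, hno⟩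
    ext x
    simp only [Set.mem_singleton_iff]
    grind
  · rintro rfl
    simp [PathSpread, PathCover]

lemma spread_one : {S | PathSpread 1 S} = {{0, 1}} := by
  ext S
  simp only [Set.mem_ofPred_eq, Set.mem_singleton_iff]
  constructor
  · rintro ⟨⟨hle, hz, hm, hcov⟩, hno⟩
    ext x
    simp only [Set.mem_insert_iff, Set.mem_singleton_iff]
    grind
  · rintro rfl
    simp [PathSpread, PathCover]

lemma spread_two : {S | PathSpread 2 S} = {{0, 2}} := by
  ext S
  simp only [Set.mem_ofPred_eq, Set.mem_singleton_iff]
  constructor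
  · rintro ⟨⟨hle, hz, hm, hcov⟩, hno⟩
    have h1 : 1 ∉ S := fun h => hno 0 ⟨hz, h, hm⟩
    ext x
    simp only [Set.mem_insert_iff, Set.mem_singleton_iff]
    have : x ∈ S → x ≠ 1 := fun h e => h1 (e ▸ h)
    grind
  · rintro rfl
    refine ⟨⟨?_, ?_, ?_, ?_⟩, ?_⟩ <;>
      simp only [Set.mem_insert_iff, Set.mem_singleton_iff] <;> grind

/-- **Corollary (path recurrence).** For `n ≥ 4`, the number of minimal forts
of the path graph satisfies `|𝓕_{P_n}| = |𝓕_{P_{n-2}}| + |𝓕_{P_{n-3}}|`,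
with initial values `|𝓕_{P_1}| = |𝓕_{P_2}| = |𝓕_{P_3}| = 1`. -/
theorem numMinimalForts_path_recurrence :
    (∀ n : ℕ, 4 ≤ n →
      numMinimalForts (SimpleGraph.pathGraph n) =
        numMinimalForts (SimpleGraph.pathGraph (n - 2)) +
          numMinimalForts (SimpleGraph.pathGraph (n - 3))) ∧
    numMinimalForts (SimpleGraph.pathGraph 1) = 1 ∧
    numMinimalForts (SimpleGraph.pathGraph 2) = 1 ∧
    numMinimalForts (SimpleGraph.pathGraph 3) = 1 := by
  refine ⟨fun n hn => ?_, ?_, ?_, ?_⟩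
  · obtain ⟨m, rfl⟩ := Nat.exists_eq_add_of_le' hn
    rw [show m + 4 - 2 = m + 1 + 1 by omega, show m + 4 - 3 = m + 1 by omega,
      numMinimalForts_eq (m + 3), numMinimalForts_eq, numMinimalForts_eq]
    exact ncard_spread_add_three m
  · rw [numMinimalForts_eq 0, spread_zero, Set.ncard_singleton]
  · rw [numMinimalForts_eq 1, spread_one, Set.ncard_singleton]
  · rw [numMinimalForts_eq 2, spread_two, Set.ncard_singleton]
end

section
/- For all n ≥ 1, the number of minimal forts of the path graph P_n equals the nearest integer to ψ^{n+4} / (2ψ + 3), where ψ is the plastic ratio. Moreover, the limit as n → ∞ of the ratio |𝓕_{P_{n+1}}| / |𝓕_{P_n}| equals ψ. -/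
/-!
On a path, a vertex outside a fort `F` must have both of its neighbours in `F` or none, and in the
second case emptiness propagates along the whole path. Hence the forts of `P_n` are exactly the
vertex sets that contain both endpoints and miss no two consecutive vertices
(`isFort_path_iff`). This family is closed under supersets, so such a set is minimal iff no single
vertex can be removed, i.e. iff it contains no three consecutive vertices (`isMinimalFort_path_iff`).

The last missing vertex of such a set is the second or the third from the end; cutting there gives
the Padovan recurrence `a (n + 3) = a (n + 1) + a n` with `a 0 = 0`, `a 1 = a 2 = 1`.

Finally put `e n = a n - ψ ^ (n + 4) / (2 ψ + 3)`. The constant is chosen so that `e` has no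
component along `ψ ^ n`, i.e. `e` satisfies the recurrence
`e (n + 2) + ψ e (n + 1) + (ψ² - 1) e n = 0` of the remaining quadratic factor of `λ³ - λ - 1`.
The positive definite form `e (n + 1)² + ψ e (n + 1) e n + (ψ² - 1) (e n)²` is multiplied by
`ψ² - 1 < 1` at each step, which bounds `|e n|` below `1 / 2` for `n ≥ 1`.
-/


open SimpleGraph

/-! ### Forts of a path -/

/-- `S` is a set of vertices of the path `0, …, n - 1` that contains both endpoints and misses no
two consecutive vertices. There is no such set for `n = 0`. -/
def PathFort (n : ℕ) (S : Set ℕ) : Prop :=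
  (∀ i ∈ S, i < n) ∧ 0 ∈ S ∧ (∀ i, i + 1 = n → i ∈ S) ∧ ∀ i, i + 1 < n → i ∈ S ∨ i + 1 ∈ S

/-- A `PathFort` without three consecutive vertices. -/
def PathMinFort (n : ℕ) (S : Set ℕ) : Prop :=
  PathFort n S ∧ ∀ i, i ∈ S → i + 1 ∈ S → i + 2 ∉ S

lemma mem_image_val {n : ℕ} (F : Set (Fin n)) (i : ℕ) :
    i ∈ Fin.val '' F ↔ ∃ h : i < n, (⟨i, h⟩ : Fin n) ∈ F := by
  constructor
  · rintro ⟨x, hx, rfl⟩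
    exact ⟨x.2, hx⟩
  · rintro ⟨h, hF⟩
    exact ⟨_, hF, rfl⟩

lemma isFort_path_iff {n : ℕ} (F : Set (Fin n)) :
    IsFort (pathGraph n) F ↔ PathFort n (Fin.val '' F) := by
  have hlt : ∀ i ∈ Fin.val '' F, i < n := by
    rintro _ ⟨x, _, rfl⟩
    exact x.2
  constructor
  · rintro ⟨⟨x, hx⟩, hF⟩
    have hxS : x.1 ∈ Fin.val '' F := ⟨x, hx, rfl⟩
    have hxn := x.2
    have hmem : ∀ (i : ℕ) (h : i < n), (⟨i, h⟩ : Fin n) ∈ F ↔ i ∈ Fin.val '' F := fun i h => by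
      rw [mem_image_val]; exact ⟨fun h' => ⟨h, h'⟩, fun h' => h'.2⟩
    generalize hS : Fin.val '' F = S at *
    -- a missing vertex with no left neighbour in the fort has no right neighbour in it either
    have up : ∀ i, i ∉ S → (∀ j, j + 1 = i → j ∉ S) → i + 1 ∉ S := by
      intro i hi hj h1
      have hn := hlt _ h1
      refine hF ⟨i, by omega⟩ (by rwa [hmem]) ⟨⟨i + 1, hn⟩, ⟨by rwa [hmem], ?_⟩, ?_⟩
      · rw [pathGraph_adj]; left; rfl
      · rintro ⟨w, hw⟩ ⟨hwF, hadj⟩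
        rw [pathGraph_adj] at hadj
        rw [hmem] at hwF
        rcases hadj with h | h
        · exact Fin.ext h.symm
        · exact absurd hwF (hj _ h)
    have down : ∀ i, i + 1 < n → i + 1 ∉ S → i + 2 ∉ S → i ∉ S := by
      intro i hn hi hj h1
      refine hF ⟨i + 1, hn⟩ (by rwa [hmem]) ⟨⟨i, by omega⟩, ⟨by rwa [hmem], ?_⟩, ?_⟩
      · rw [pathGraph_adj]; right; rfl
      · rintro ⟨w, hw⟩ ⟨hwF, hadj⟩
        rw [pathGraph_adj] at hadj
        rw [hmem] at hwF
        rcases hadj with h | h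
        · have h : i + 1 + 1 = w := h
          subst h
          exact absurd hwF hj
        · have h : w + 1 = i + 1 := h
          exact Fin.ext (by simpa using h)
    have upAll : ∀ i, i ∉ S → i + 1 ∉ S → ∀ k, i + k ∉ S ∧ i + k + 1 ∉ S := by
      intro i h0 h1 k
      induction k with
      | zero => exact ⟨h0, h1⟩
      | succ k ih =>
        refine ⟨ih.2, up _ ih.2 ?_⟩
        intro j hj
        obtain rfl : j = i + k := by omega
        exact ih.1
    have downAll : ∀ i, i < n → i ∉ S → i + 1 ∉ S → ∀ j ≤ i, j ∉ S := by
      intro i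
      induction i with
      | zero => intro _ h0 _ j hj; obtain rfl : j = 0 := by omega
                exact h0
      | succ i ih =>
        intro hn h0 h1 j hj
        rcases Nat.lt_or_ge i j with h | h
        · obtain rfl : j = i + 1 := by omega
          exact h0
        · exact ih (by omega) (down i hn h0 h1) h0 j h
    have key : ∀ i, i < n → i ∉ S → i + 1 ∉ S → False := by
      intro i hn h0 h1
      rcases Nat.lt_or_ge i x.1 with h | h
      · have := (upAll i h0 h1 (x.1 - i)).1
        rw [Nat.add_sub_cancel' h.le] at this
        exact this hxS
      · exact downAll i hn h0 h1 _ h hxS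
    refine ⟨hlt, ?_, ?_, ?_⟩
    · by_contra h0
      exact key 0 (by omega) h0 (up 0 h0 (by intro j hj; omega))
    · intro i hi
      by_contra h0
      exact key i (by omega) h0 (fun h => by have := hlt _ h; omega)
    · intro i hi
      by_contra! h
      exact key i (by omega) h.1 h.2
  · rintro ⟨-, h0, hl, hc⟩
    refine ⟨?_, ?_⟩
    · obtain ⟨x, hx, -⟩ := h0
      exact ⟨x, hx⟩
    · rintro ⟨u, hu⟩ huF ⟨w, -, huniq⟩
      have huS : u ∉ Fin.val '' F := by
        rw [mem_image_val]; rintro ⟨_, h⟩; exact huF h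
      have hu0 : u ≠ 0 := by rintro rfl; exact huS h0
      have hun : u + 1 ≠ n := fun h => huS (hl u h)
      obtain ⟨v, rfl⟩ := Nat.exists_eq_succ_of_ne_zero hu0
      have h1 := (hc v (by omega)).resolve_right huS
      have h2 := (hc (v + 1) (by omega)).resolve_left huS
      rw [mem_image_val] at h1 h2
      obtain ⟨h1n, h1⟩ := h1
      obtain ⟨h2n, h2⟩ := h2
      have e1 := huniq _ ⟨h1, by rw [pathGraph_adj]; right; rfl⟩
      have e2 := huniq _ ⟨h2, by rw [pathGraph_adj]; left; rfl⟩
      have := congrArg Fin.val (e1.trans e2.symm)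
      simp only at this
      omega

lemma isMinimalFort_path_iff {n : ℕ} (F : Set (Fin n)) :
    IsMinimalFort (pathGraph n) F ↔ PathMinFort n (Fin.val '' F) := by
  unfold IsMinimalFort PathMinFort
  rw [isFort_path_iff]
  refine and_congr_right fun hF => ?_
  obtain ⟨hlt, h0, hl, hc⟩ := hF
  constructor
  · intro hmin i hi hi1 hi2
    have hi1' := hi1
    rw [mem_image_val] at hi1'
    obtain ⟨hn, hiF⟩ := hi1'
    have hn2 := hlt _ hi2
    refine hmin (F \ {⟨i + 1, hn⟩}) ⟨Set.sdiff_subset, fun h => (h hiF).2 rfl⟩ ?_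
    rw [isFort_path_iff]
    have himg : Fin.val '' (F \ {⟨i + 1, hn⟩}) = (Fin.val '' F) \ {i + 1} := by
      rw [Set.image_sdiff Fin.val_injective, Set.image_singleton]
    rw [himg]
    refine ⟨fun j hj => hlt j hj.1, ⟨h0, by simp⟩, fun j hj => ⟨hl j hj, ?_⟩, fun j hj => ?_⟩
    · simp only [Set.mem_singleton_iff]; omega
    · by_cases hj1 : j = i + 1
      · subst hj1
        exact Or.inr ⟨hi2, by simp⟩
      · by_cases hj2 : j = i
        · subst hj2
          exact Or.inl ⟨hi, by simp⟩
        · rcases hc j hj with h | h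
          · exact Or.inl ⟨h, hj1⟩
          · exact Or.inr ⟨h, by simp only [Set.mem_singleton_iff]; omega⟩
  · rintro hno F' ⟨hsub, hns⟩ hF'
    rw [isFort_path_iff] at hF'
    obtain ⟨-, h0', hl', hc'⟩ := hF'
    apply hns
    rintro ⟨u, hu⟩ huF
    by_contra huF'
    have huS : u ∉ Fin.val '' F' := by
      rw [mem_image_val]; rintro ⟨_, h⟩; exact huF' h
    have hu0 : u ≠ 0 := by rintro rfl; exact huS h0'
    have hun : u + 1 ≠ n := fun h => huS (hl' u h)
    obtain ⟨v, rfl⟩ := Nat.exists_eq_succ_of_ne_zero hu0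
    have h1 := (hc' v (by omega)).resolve_right huS
    have h2 := (hc' (v + 1) (by omega)).resolve_left huS
    exact hno v (Set.image_mono hsub h1) ⟨_, huF, rfl⟩ (Set.image_mono hsub h2)

lemma numMinimalForts_path (n : ℕ) :
    numMinimalForts (pathGraph n) = {S | PathMinFort n S}.ncard := by
  unfold numMinimalForts
  rw [← Set.ncard_image_of_injective _ (Set.image_injective.2 (Fin.val_injective (n := n)))]
  congr 1
  ext S
  simp only [Set.mem_image, Set.mem_ofPred_eq]
  constructor
  · rintro ⟨F, hF, rfl⟩
    exact (isMinimalFort_path_iff F).1 hF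
  · intro hS
    have : Fin.val '' ((Fin.val : Fin n → ℕ) ⁻¹' S) = S :=
      Set.image_preimage_eq_of_subset fun i hi => ⟨⟨i, hS.1.1 i hi⟩, rfl⟩
    exact ⟨_, (isMinimalFort_path_iff _).2 (by rwa [this]), this⟩

/-! ### The Padovan recurrence -/

lemma finite_pathMinFort (n : ℕ) : {S | PathMinFort n S}.Finite :=
  (Set.finite_Iio n).finite_subsets.subset fun _ hS i hi => hS.1.1 i hi

lemma count_zero : {S | PathMinFort 0 S}.ncard = 0 := by
  rw [Set.ncard_eq_zero (finite_pathMinFort 0)]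
  ext S
  simp only [Set.mem_ofPred_eq, Set.mem_empty_iff_false, iff_false]
  intro h
  exact absurd (h.1.1 0 h.1.2.1) (by omega)

lemma count_one : {S | PathMinFort 1 S}.ncard = 1 := by
  rw [Set.ncard_eq_one]
  refine ⟨{0}, ?_⟩
  ext S
  simp only [Set.mem_ofPred_eq, Set.mem_singleton_iff]
  constructor
  · intro h
    ext i
    have h0 := h.1.2.1
    have := h.1.1 i
    simp only [Set.mem_singleton_iff]
    constructor
    · intro hi; have := this hi; omega
    · rintro rfl; exact h0
  · rintro rfl
    refine ⟨⟨?_, ?_, ?_, ?_⟩, ?_⟩ <;> simp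

lemma count_two : {S | PathMinFort 2 S}.ncard = 1 := by
  rw [Set.ncard_eq_one]
  refine ⟨{0, 1}, ?_⟩
  ext S
  simp only [Set.mem_ofPred_eq, Set.mem_singleton_iff]
  constructor
  · intro h
    ext i
    have h0 := h.1.2.1
    have h1 := h.1.2.2.1 1 rfl
    have := h.1.1 i
    simp only [Set.mem_insert_iff, Set.mem_singleton_iff]
    constructor
    · intro hi; have := this hi; omega
    · rintro (rfl | rfl) <;> assumption
  · rintro rfl
    refine ⟨⟨?_, ?_, ?_, ?_⟩, ?_⟩ <;> simp

/-- The last vertex `n + 2` is present; either `n + 1` is missing, and removing `n + 2` leaves a set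
for `n + 1`, or `n + 1` is present, hence `n` is missing, and removing both leaves a set for `n`. -/
lemma pathMinFort_succ (n : ℕ) :
    {S | PathMinFort (n + 3) S} =
      (fun S => insert (n + 2) S) '' {S | PathMinFort (n + 1) S} ∪
      (fun S => insert (n + 2) (insert (n + 1) S)) '' {S | PathMinFort n S} := by
  ext S
  simp only [Set.mem_ofPred_eq, Set.mem_union, Set.mem_image]
  constructor
  · rintro ⟨⟨hlt, h0, hl, hc⟩, h3⟩
    have hlast := hl (n + 2) rfl
    by_cases h1 : n + 1 ∈ S
    · right
      have hn : n ∉ S := fun h => h3 n h h1 hlast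
      refine ⟨S ∩ Set.Iio n, ⟨⟨fun i hi => hi.2, ⟨h0, ?_⟩, ?_, ?_⟩, ?_⟩, ?_⟩
      · rcases Nat.eq_zero_or_pos n with rfl | h
        · exact absurd h0 hn
        · exact h
      · rintro i rfl
        exact ⟨(hc i (by omega)).resolve_right hn, by simp⟩
      · intro i hi
        rcases hc i (by omega) with h | h
        · exact Or.inl ⟨h, by simp only [Set.mem_Iio]; omega⟩
        · exact Or.inr ⟨h, hi⟩
      · intro i a b c
        exact h3 i a.1 b.1 c.1
      · ext i
        have := hlt i
        simp only [Set.mem_insert_iff, Set.mem_inter_iff, Set.mem_Iio]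
        constructor
        · rintro (rfl | rfl | h)
          · exact hlast
          · exact h1
          · exact h.1
        · intro hi
          have := this hi
          have : i ≠ n := by rintro rfl; exact hn hi
          by_cases i < n
          · exact Or.inr (Or.inr ⟨hi, by assumption⟩)
          · omega
    · left
      have hn : n ∈ S := (hc n (by omega)).resolve_right h1
      refine ⟨S ∩ Set.Iio (n + 1), ⟨⟨fun i hi => hi.2, ⟨h0, by simp⟩, ?_, ?_⟩, ?_⟩, ?_⟩
      · intro i hi
        obtain rfl : i = n := by omega
        exact ⟨hn, by simp⟩
      · intro i hi
        rcases hc i (by omega) with h | h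
        · exact Or.inl ⟨h, by simp only [Set.mem_Iio]; omega⟩
        · exact Or.inr ⟨h, hi⟩
      · intro i a b c
        exact h3 i a.1 b.1 c.1
      · ext i
        have := hlt i
        simp only [Set.mem_insert_iff, Set.mem_inter_iff, Set.mem_Iio]
        constructor
        · rintro (rfl | h)
          · exact hlast
          · exact h.1
        · intro hi
          have := this hi
          have : i ≠ n + 1 := by rintro rfl; exact h1 hi
          by_cases i < n + 1
          · exact Or.inr ⟨hi, by assumption⟩
          · omega
  · rintro (⟨T, ⟨⟨hlt, h0, hl, hc⟩, h3⟩, rfl⟩ | ⟨T, ⟨⟨hlt, h0, hl, hc⟩, h3⟩, rfl⟩)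
    · have hn := hl n rfl
      refine ⟨⟨?_, ?_, ?_, ?_⟩, ?_⟩
      · rintro i (rfl | h)
        · omega
        · have := hlt i h; omega
      · exact Or.inr h0
      · intro i hi; left; omega
      · intro i hi
        simp only [Set.mem_insert_iff]
        have := hc i
        rcases Nat.lt_trichotomy i n with h | rfl | h
        · have := this (by omega); tauto
        · tauto
        · right; left; omega
      · intro i
        simp only [Set.mem_insert_iff]
        have a0 := hlt i
        have a1 := hlt (i + 1)
        have a2 := hlt (i + 2)
        have a3 := h3 i
        rintro (h | h) (h' | h') (h'' | h'') <;> first | omega | exact a3 h h' h'' | skip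
        all_goals first | (have := a1 h'; omega) | (have := a2 h''; omega)
    · have hn : n - 1 ∈ T := hl _ (by have := hlt _ h0; omega)
      have hnpos := hlt _ h0
      refine ⟨⟨?_, ?_, ?_, ?_⟩, ?_⟩
      · rintro i (rfl | rfl | h)
        · omega
        · omega
        · have := hlt i h; omega
      · exact Or.inr (Or.inr h0)
      · intro i hi; left; omega
      · intro i hi
        simp only [Set.mem_insert_iff]
        have h4 := hc i
        by_cases h : i + 1 < n
        · have := h4 h; tauto
        · by_cases h5 : i + 1 = n
          · have := hl i h5; tauto
          · omega
      · intro i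
        simp only [Set.mem_insert_iff]
        have a0 := hlt i
        have a1 := hlt (i + 1)
        have a2 := hlt (i + 2)
        have a3 := h3 i
        rintro (h | h | h) (h' | h' | h') (h'' | h'' | h'') <;>
          first | omega | exact a3 h h' h'' | skip
        all_goals first | (have := a1 h'; omega) | (have := a2 h''; omega) | (have := a0 h; omega)

lemma count_succ (n : ℕ) :
    {S | PathMinFort (n + 3) S}.ncard =
      {S | PathMinFort (n + 1) S}.ncard + {S | PathMinFort n S}.ncard := by
  rw [pathMinFort_succ, Set.ncard_union_eq _ ((finite_pathMinFort _).image _)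
    ((finite_pathMinFort _).image _), Set.InjOn.ncard_image, Set.InjOn.ncard_image]
  · intro S hS T hT h
    have hS := hS.1.1
    have hT := hT.1.1
    ext i
    have h1 := Set.ext_iff.1 h i
    simp only [Set.mem_insert_iff] at h1
    have := hS i
    have := hT i
    grind
  · intro S hS T hT h
    have hS := hS.1.1
    have hT := hT.1.1
    ext i
    have h1 := Set.ext_iff.1 h i
    simp only [Set.mem_insert_iff] at h1
    have := hS i
    have := hT i
    grind
  · -- the two families are told apart by whether they contain `n + 1`
    rw [Set.disjoint_left]
    rintro _ ⟨S, hS, rfl⟩ ⟨T, hT, h⟩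
    have h1 := (Set.ext_iff.1 h (n + 1)).1 (by simp)
    rcases h1 with h1 | h1
    · omega
    · have := hS.1.1 _ h1; omega

/-! ### The error term -/

lemma plastic_bounds {ψ : ℝ} (hψ : ψ ^ 3 = ψ + 1) : 1.3247 < ψ ∧ ψ < 1.3248 := by
  have hpos : 1 < ψ := by
    by_contra! h
    nlinarith [sq_nonneg (ψ + 1), sq_nonneg ψ, mul_nonneg (sub_nonneg.2 h) (sq_nonneg (ψ + 1))]
  constructor
  · by_contra! h
    nlinarith [mul_nonneg (sub_nonneg.2 h) (sub_nonneg.2 hpos.le),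
      mul_nonneg (sub_nonneg.2 h) (sq_nonneg ψ)]
  · by_contra! h
    nlinarith [mul_nonneg (sub_nonneg.2 h) (sub_nonneg.2 hpos.le),
      mul_nonneg (sub_nonneg.2 h) (sq_nonneg ψ)]

/-- For a sequence with the Padovan recurrence and initial values `0, 1, 1`, the distance to
`ψ ^ (n + 4) / (2ψ + 3)` is below `1 / 2` from index `1` on. -/
lemma padovan_error {ψ : ℝ} (hψ : ψ ^ 3 = ψ + 1) (a : ℕ → ℝ) (h0 : a 0 = 0) (h1 : a 1 = 1)
    (h2 : a 2 = 1) (hrec : ∀ n, a (n + 3) = a (n + 1) + a n) (n : ℕ) (hn : 1 ≤ n) :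
    |a n - ψ ^ (n + 4) / (2 * ψ + 3)| < 1 / 2 := by
  obtain ⟨hlo, hhi⟩ := plastic_bounds hψ
  have hq2 : ψ ^ 2 - 1 < 0.756 := by nlinarith
  have hdisc : 0.3 < ψ ^ 2 - 1 - ψ ^ 2 / 4 := by nlinarith
  have hq : 0 < ψ ^ 2 - 1 := by nlinarith
  have hd : (2 * ψ + 3) ≠ 0 := by positivity
  set e : ℕ → ℝ := fun n => a n - ψ ^ (n + 4) / (2 * ψ + 3) with he
  -- reduce the initial powers modulo the minimal polynomial of `ψ`
  have p4 : ψ ^ 4 = ψ ^ 2 + ψ := by linear_combination ψ * hψ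
  have p5 : ψ ^ 5 = ψ ^ 2 + ψ + 1 := by linear_combination (ψ ^ 2 + 1) * hψ
  have p6 : ψ ^ 6 = ψ ^ 2 + 2 * ψ + 1 := by linear_combination (ψ ^ 3 + ψ + 1) * hψ
  have e0 : e 0 = -(ψ ^ 2 + ψ) / (2 * ψ + 3) := by simp only [he, h0]; rw [← p4]; ring
  have e1 : e 1 = (2 + ψ - ψ ^ 2) / (2 * ψ + 3) := by
    simp only [he, h1]; rw [show 1 + 4 = 5 from rfl, p5]; field_simp; ring
  have e2 : e 2 = (2 - ψ ^ 2) / (2 * ψ + 3) := by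
    simp only [he, h2]; rw [show 2 + 4 = 6 from rfl, p6]; field_simp; ring
  have erec : ∀ n, e (n + 3) = e (n + 1) + e n := by
    intro n
    simp only [he, hrec]
    have : ψ ^ (n + 3 + 4) = ψ ^ (n + 1 + 4) + ψ ^ (n + 4) := by
      linear_combination ψ ^ (n + 4) * hψ
    rw [this]; ring
  have equad : ∀ n, e (n + 2) = -ψ * e (n + 1) - (ψ ^ 2 - 1) * e n := by
    intro n
    induction n with
    | zero =>
      simp only [Nat.zero_add]
      rw [e0, e1, e2]; field_simp
      linear_combination (-ψ - 2) * hψ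
    | succ n ih =>
      rw [show n + 1 + 2 = n + 3 from rfl, erec, show n + 1 + 1 = n + 2 from rfl]
      linear_combination ψ * ih - e n * hψ
  set Q : ℕ → ℝ := fun n => e (n + 1) ^ 2 + ψ * e (n + 1) * e n + (ψ ^ 2 - 1) * e n ^ 2 with hQ
  have Qrec : ∀ n, Q (n + 1) = (ψ ^ 2 - 1) * Q n := by
    intro n
    simp only [hQ]
    rw [show n + 1 + 1 = n + 2 from rfl, equad]; ring
  have e1lo : 0 < e 1 := by rw [e1]; apply div_pos <;> nlinarith
  have e1hi : e 1 < 0.28 := by rw [e1, div_lt_iff₀ (by positivity)]; nlinarith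
  have e2lo : 0 < e 2 := by rw [e2]; apply div_pos <;> nlinarith
  have e2hi : e 2 < 0.05 := by rw [e2, div_lt_iff₀ (by positivity)]; nlinarith
  have hQ1 : Q 1 < 0.081 := by
    have t1 : e 2 ^ 2 < 0.0025 := by nlinarith
    have t2 : e 2 * e 1 < 0.014 := by nlinarith
    have t3 : e 1 ^ 2 < 0.0784 := by nlinarith
    have t4 : ψ * (e 2 * e 1) < 1.3248 * 0.014 := by
      apply mul_lt_mul'' hhi t2 <;> positivity
    have t5 : (ψ ^ 2 - 1) * e 1 ^ 2 < 0.756 * 0.0784 := by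
      apply mul_lt_mul'' hq2 t3 <;> positivity
    simp only [hQ]
    rw [show 1 + 1 = 2 from rfl]
    nlinarith
  have hQ2 : ∀ n, Q (n + 2) < 0.07 := by
    intro n
    induction n with
    | zero =>
      rw [Qrec]
      linarith [mul_lt_mul_of_pos_left hQ1 hq]
    | succ n ih =>
      rw [show n + 1 + 2 = n + 2 + 1 from rfl, Qrec]
      linarith [mul_lt_mul_of_pos_left ih hq]
  change |e n| < 1 / 2
  rcases Nat.lt_or_ge n 2 with h | h
  · obtain rfl : n = 1 := by omega
    rw [abs_lt]; constructor <;> linarith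
  · obtain ⟨m, rfl⟩ := Nat.exists_eq_add_of_le' h
    have hm := hQ2 m
    simp only [hQ] at hm
    -- complete the square in the positive definite form `Q`
    have hsq : e (m + 2) ^ 2 < (1 / 2) ^ 2 := by
      have t1 := sq_nonneg (e (m + 2 + 1) + ψ / 2 * e (m + 2))
      have t2 := mul_le_mul_of_nonneg_right hdisc.le (sq_nonneg (e (m + 2)))
      linarith
    exact abs_lt_of_sq_lt_sq hsq (by norm_num)

/-- **Corollary.** For `n ≥ 1`, the number of minimal forts of the path graph
`P_n` is the nearest integer to `ψ ^ (n + 4) / (2ψ + 3)`, where `ψ` is the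
plastic ratio (the unique real root of `λ³ - λ - 1`); moreover the successive
ratios `|𝓕_{P_{n+1}}| / |𝓕_{P_n}|` converge to `ψ`. -/
theorem numMinimalForts_path_round (ψ : ℝ) (hψ : ψ ^ 3 = ψ + 1) :
    (∀ n : ℕ, 1 ≤ n →
      (numMinimalForts (SimpleGraph.pathGraph n) : ℤ) =
        round (ψ ^ (n + 4) / (2 * ψ + 3))) ∧
    Filter.Tendsto
      (fun n : ℕ => (numMinimalForts (SimpleGraph.pathGraph (n + 1)) : ℝ) /
        (numMinimalForts (SimpleGraph.pathGraph n) : ℝ))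
      Filter.atTop (nhds ψ) := by
  obtain ⟨hlo, hhi⟩ := plastic_bounds hψ
  have herr := padovan_error hψ (fun n => (numMinimalForts (pathGraph n) : ℝ))
    (by simp [numMinimalForts_path, count_zero]) (by simp [numMinimalForts_path, count_one])
    (by simp [numMinimalForts_path, count_two])
    (fun n => by simp only [numMinimalForts_path]; exact_mod_cast count_succ n)
  constructor
  · intro n hn
    have h := abs_lt.1 (herr n hn)
    symm
    rw [round_eq, Int.floor_eq_iff]
    push_cast
    constructor <;> linarith [h.1, h.2]
  · -- the bounded error is negligible against `ψ ^ n`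
    have hψ0 : ψ ≠ 0 := by linarith
    set c : ℝ := ψ ^ 4 / (2 * ψ + 3) with hc
    have hc0 : c ≠ 0 := by positivity
    set a : ℕ → ℝ := fun n => (numMinimalForts (pathGraph n) : ℝ) with ha
    have hlim : Filter.Tendsto (fun n => a n / ψ ^ n) Filter.atTop (nhds c) := by
      have hz : Filter.Tendsto (fun n : ℕ => 1 / 2 * (ψ⁻¹) ^ n) Filter.atTop (nhds 0) := by
        have := (tendsto_pow_atTop_nhds_zero_of_lt_one (r := ψ⁻¹) (by positivity)
          (inv_lt_one_of_one_lt₀ (by linarith))).const_mul (1 / 2)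
        simpa using this
      rw [tendsto_iff_norm_sub_tendsto_zero]
      refine squeeze_zero' (Filter.Eventually.of_forall fun _ => norm_nonneg _) ?_ hz
      filter_upwards [Filter.eventually_ge_atTop 1] with n hn
      have h1 : a n / ψ ^ n - c = (a n - ψ ^ (n + 4) / (2 * ψ + 3)) * (ψ⁻¹) ^ n := by
        rw [hc, pow_add, inv_pow]; field_simp
      rw [h1, Real.norm_eq_abs, abs_mul, abs_of_nonneg (a := (ψ⁻¹) ^ n) (by positivity)]
      exact mul_le_mul_of_nonneg_right (herr n hn).le (by positivity)
    have hlim' := (((Filter.tendsto_add_atTop_iff_nat 1).2 hlim).div hlim hc0).const_mul ψ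
    rw [div_self hc0, mul_one] at hlim'
    refine hlim'.congr fun n => ?_
    change ψ * (a (n + 1) / ψ ^ (n + 1) / (a n / ψ ^ n)) = a (n + 1) / a n
    rw [pow_succ]
    field_simp
end

section
/- Let T be a tree of order n ≥ 2 and let F ⊆ V(T) be a minimal fort of T. Let u, v ∈ F be distinct vertices and let W = {w_0, w_1, …, w_ℓ} denote the vertex set of the unique (u,v)-path in T. Then the induced subgraph T[W] is a path graph of order ℓ + 1, and F' = F ∩ W is a minimal fort of T[W]. -/
/-!
Write the path as `f 0, …, f ℓ`. Removing the edge `s(w, a)` from a tree cuts off a *branch*: the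
component of `a`, which touches the rest of the tree only through `a — w`. Intersecting `F` with
branches at an interior path vertex `w = f i`, with path neighbours `a = f (i - 1)` and
`b = f (i + 1)`, gives smaller forts unless `F` has a rigid local shape:

* if `w ∉ F`, then `a, b ∈ F`: otherwise `F` intersected with the branch at `a` (or at `b`) is a
  fort, and it misses the other end of the path (`IsFort.inter_branch`,
  `IsMinimalFort.pred_mem`, `IsMinimalFort.succ_mem`);
* if `w ∈ F`, then `a` and `b` are not both in `F`: otherwise `F` intersected with the union of the
  two branches is a fort, and it misses `w` (`IsFort.inter_branch_union`).

The first fact says that `F ∩ W` is a fort of the path `T[W]`. For minimality, a fort of a path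
graph never omits two consecutive vertices, nor an end vertex (`no_two_consecutive`). So a fort of
`T[W]` properly contained in `F ∩ W` omits some interior `w ∈ F ∩ W` and contains both path
neighbours of `w`, which then lie in `F`; this contradicts the second fact.
-/

open SimpleGraph

/-- The component of `a` after deleting the edge `s(w, a)`. In a tree with `w` adjacent to `a`, this
is the branch at `w` that contains `a`. -/
def branch {V : Type*} (T : SimpleGraph V) (w a : V) : Set V :=
  {x | (T.deleteEdges {s(w, a)}).Reachable a x}

section Branch

variable {V : Type*} {T : SimpleGraph V} {w a x y : V}

lemma self_mem_branch : a ∈ branch T w a := Reachable.refl _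

/-- Every edge of an acyclic graph is a bridge, so a branch at `w` does not contain `w`. -/
lemma notMem_branch (hT : T.IsAcyclic) (h : T.Adj w a) : w ∉ branch T w a := by
  intro hw
  have hb := isAcyclic_iff_forall_adj_isBridge.1 hT h
  exact (isBridge_iff.1 hb) hw.symm

lemma branch_step (hT : T.IsAcyclic) (h : T.Adj w a) (hx : x ∈ branch T w a) (hxy : T.Adj x y)
    (hy : y ≠ w) : y ∈ branch T w a := by
  have hxw : x ≠ w := fun e => notMem_branch hT h (e ▸ hx)
  refine Reachable.trans (v := x) hx (Adj.reachable ?_)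
  rw [deleteEdges_adj]
  refine ⟨hxy, ?_⟩
  simp only [Set.mem_singleton_iff, Sym2.eq_iff]
  tauto

lemma eq_of_mem_branch_of_adj (hT : T.IsAcyclic) (h : T.Adj w a) (hx : x ∈ branch T w a)
    (hxw : T.Adj x w) : x = a := by
  by_contra hne
  refine notMem_branch hT h (Reachable.trans (v := x) hx (Adj.reachable ?_))
  rw [deleteEdges_adj]
  refine ⟨hxw, ?_⟩
  simp only [Set.mem_singleton_iff, Sym2.eq_iff]
  have := hxw.ne
  tauto

/-- If neither `w` nor `a` is in the fort `F`, cutting `F` down to the branch changes no vertex's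
set of neighbours in `F` inside the branch, and leaves none outside it. -/
lemma IsFort.inter_branch (hT : T.IsAcyclic) (h : T.Adj w a) {F : Set V} (hF : IsFort T F)
    (hw : w ∉ F) (ha : a ∉ F) (hne : (F ∩ branch T w a).Nonempty) :
    IsFort T (F ∩ branch T w a) := by
  refine ⟨hne, ?_⟩
  rintro x hx ⟨y, ⟨⟨hyF, hyB⟩, hxy⟩, huniq⟩
  by_cases hxw : x = w
  · subst hxw
    exact ha (eq_of_mem_branch_of_adj hT h hyB hxy.symm ▸ hyF)
  have hxB : x ∈ branch T w a := branch_step hT h hyB hxy.symm hxw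
  refine hF.2 x (fun hxF => hx ⟨hxF, hxB⟩) ⟨y, ⟨hyF, hxy⟩, ?_⟩
  rintro z ⟨hzF, hxz⟩
  exact huniq z ⟨⟨hzF, branch_step hT h hxB hxz (fun e => hw (e ▸ hzF))⟩, hxz⟩

/-- If two neighbours `a ≠ b` of `w` lie in the fort `F`, then `F` cut down to the branches of `a`
and `b` is still a fort: `w` has both `a` and `b` as neighbours, and no vertex of the two
branches other than `a` and `b` is adjacent to `w`. -/
lemma IsFort.inter_branch_union (hT : T.IsAcyclic) {b : V} (h : T.Adj w a) (h' : T.Adj w b)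
    (hab : a ≠ b) {F : Set V} (hF : IsFort T F) (ha : a ∈ F) (hb : b ∈ F) :
    IsFort T (F ∩ (branch T w a ∪ branch T w b)) := by
  have haM : a ∈ F ∩ (branch T w a ∪ branch T w b) := ⟨ha, Or.inl self_mem_branch⟩
  have hbM : b ∈ F ∩ (branch T w a ∪ branch T w b) := ⟨hb, Or.inr self_mem_branch⟩
  refine ⟨⟨a, haM⟩, ?_⟩
  rintro x hx ⟨y, ⟨⟨hyF, hyB⟩, hxy⟩, huniq⟩
  by_cases hxw : x = w
  · subst hxw
    exact hab ((huniq a ⟨haM, h⟩).trans (huniq b ⟨hbM, h'⟩).symm)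
  have hxB : x ∈ branch T w a ∪ branch T w b :=
    hyB.imp (branch_step hT h · hxy.symm hxw) (branch_step hT h' · hxy.symm hxw)
  have hxF : x ∉ F := fun hxF => hx ⟨hxF, hxB⟩
  refine hF.2 x hxF ⟨y, ⟨hyF, hxy⟩, ?_⟩
  rintro z ⟨hzF, hxz⟩
  have hzw : z ≠ w := by
    rintro rfl
    rcases hxB with hB | hB
    · exact hxF (eq_of_mem_branch_of_adj hT h hB hxz ▸ ha)
    · exact hxF (eq_of_mem_branch_of_adj hT h' hB hxz ▸ hb)
  exact huniq z ⟨⟨hzF, hxB.imp (branch_step hT h · hxz hzw) (branch_step hT h' · hxz hzw)⟩, hxz⟩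

end Branch

section Sequence

variable {V : Type*} {T : SimpleGraph V} {f : ℕ → V} {l : ℕ}

/-- Walking down from a path vertex `f j` of a branch at `w` stays in the branch as long as `w` is
not met. -/
lemma mem_branch_of_le (hT : T.IsAcyclic) (hadj : ∀ i < l, T.Adj (f i) (f (i + 1)))
    {w a : V} (h : T.Adj w a) {j : ℕ} (hj : j ≤ l) (hja : f j ∈ branch T w a) {i : ℕ} (hij : i ≤ j)
    (havoid : ∀ k, i ≤ k → k < j → f k ≠ w) : f i ∈ branch T w a := by
  induction hij using Nat.decreasingInduction with
  | self => exact hja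
  | of_succ k hk ih =>
    exact branch_step hT h (ih fun m hm => havoid m (by omega)) (hadj k (by omega)).symm
      (havoid k le_rfl hk)

/-- A path in an acyclic graph is induced. -/
lemma eq_succ_of_adj (hT : T.IsAcyclic) (hadj : ∀ i < l, T.Adj (f i) (f (i + 1)))
    (hinj : ∀ i ≤ l, ∀ j ≤ l, f i = f j → i = j) {i j : ℕ} (hij : i < j) (hj : j ≤ l)
    (h : T.Adj (f i) (f j)) : j = i + 1 := by
  have hm : f (i + 1) ∈ branch T (f i) (f j) :=
    mem_branch_of_le hT hadj h hj self_mem_branch (i := i + 1) hij fun k hk hkj e => by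
      have := hinj k (by omega) i (by omega) e
      omega
  exact (hinj _ (by omega) _ hj
    (eq_of_mem_branch_of_adj hT h hm (hadj i (by omega)).symm)).symm

lemma adj_iff (hT : T.IsAcyclic) (hadj : ∀ i < l, T.Adj (f i) (f (i + 1)))
    (hinj : ∀ i ≤ l, ∀ j ≤ l, f i = f j → i = j) {i j : ℕ} (hi : i ≤ l) (hj : j ≤ l) :
    T.Adj (f i) (f j) ↔ i + 1 = j ∨ j + 1 = i := by
  constructor
  · intro h
    rcases lt_trichotomy i j with hij | rfl | hij
    · exact Or.inl (eq_succ_of_adj hT hadj hinj hij hj h).symm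
    · exact (h.ne rfl).elim
    · exact Or.inr (eq_succ_of_adj hT hadj hinj hij hi h.symm).symm
  · rintro (rfl | rfl)
    · exact hadj i (by omega)
    · exact (hadj j (by omega)).symm

/-- If `F` omitted `f i` as well as `f (i + 1)`, then `F` cut down to the branch of `f i` at
`f (i + 1)` would be a fort containing `f 0` but not `f l`. -/
lemma IsMinimalFort.pred_mem (hT : T.IsAcyclic) (hadj : ∀ i < l, T.Adj (f i) (f (i + 1)))
    (hinj : ∀ i ≤ l, ∀ j ≤ l, f i = f j → i = j) {F : Set V} (hF : IsMinimalFort T F)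
    (h0 : f 0 ∈ F) (hl : f l ∈ F) {i : ℕ} (hi : i + 1 < l) (hw : f (i + 1) ∉ F) : f i ∈ F := by
  by_contra ha
  have h := (hadj i (by omega)).symm
  have h0B : f 0 ∈ branch T (f (i + 1)) (f i) :=
    mem_branch_of_le hT hadj h (by omega) self_mem_branch (Nat.zero_le i) fun k _ hk e => by
      have := hinj k (by omega) (i + 1) (by omega) e
      omega
  have hlB : f l ∉ branch T (f (i + 1)) (f i) := by
    intro hlB
    have hm : f (i + 2) ∈ branch T (f (i + 1)) (f i) :=
      mem_branch_of_le hT hadj h le_rfl hlB hi fun k hk hkl e => by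
        have := hinj k (by omega) (i + 1) (by omega) e
        omega
    have := hinj _ (by omega) _ (by omega)
      (eq_of_mem_branch_of_adj hT h hm (hadj (i + 1) hi).symm)
    omega
  refine hF.2 (F ∩ branch T (f (i + 1)) (f i)) ⟨Set.inter_subset_left, fun hs => hlB (hs hl).2⟩ ?_
  exact hF.1.inter_branch hT h hw ha ⟨_, h0, h0B⟩

/-- The mirror image of `IsMinimalFort.pred_mem`, obtained by reversing the path. -/
lemma IsMinimalFort.succ_mem (hT : T.IsAcyclic) (hadj : ∀ i < l, T.Adj (f i) (f (i + 1)))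
    (hinj : ∀ i ≤ l, ∀ j ≤ l, f i = f j → i = j) {F : Set V} (hF : IsMinimalFort T F)
    (h0 : f 0 ∈ F) (hl : f l ∈ F) {i : ℕ} (hi : i + 1 < l) (hw : f (i + 1) ∉ F) :
    f (i + 2) ∈ F := by
  have key := IsMinimalFort.pred_mem (f := fun n => f (l - n)) (l := l) hT ?_ ?_ hF
    (by simpa using hl) (by simpa using h0) (i := l - (i + 2)) (by omega) ?_
  · have e : l - (l - (i + 2)) = i + 2 := by omega
    simpa only [e] using key
  · intro k hk
    have e : l - k = l - (k + 1) + 1 := by omega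
    simp only [e]
    exact (hadj (l - (k + 1)) (by omega)).symm
  · intro k hk j hj e
    have := hinj _ (by omega) _ (by omega) e
    omega
  · have e : l - (l - (i + 2) + 1) = i + 1 := by omega
    simpa only [e] using hw

end Sequence

/-- The shape of a fort `s` of the path on `1, …, n`, padded by the nonmembers `0` and `n + 1`:
two consecutive nonmembers would propagate in both directions and make `s` empty. -/
lemma no_two_consecutive {s : ℕ → Prop} {n : ℕ} (hs : ∀ m, s m → 1 ≤ m ∧ m ≤ n)
    (hne : ∃ m, s m) (hfort : ∀ m, m + 1 ≤ n → ¬ s (m + 1) → (s m ↔ s (m + 2)))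
    {k : ℕ} (hk : k ≤ n) (h0 : ¬ s k) : s (k + 1) := by
  by_contra h1
  have up : ∀ d, ¬ s (k + d) ∧ ¬ s (k + d + 1) := by
    intro d
    induction d with
    | zero => exact ⟨h0, h1⟩
    | succ d ih =>
      refine ⟨ih.2, fun h => ?_⟩
      by_cases hd : k + d + 1 ≤ n
      · exact ih.1 ((hfort _ hd ih.2).2 h)
      · have := hs _ h
        omega
  have down : ∀ j ≤ k, ¬ s j ∧ ¬ s (j + 1) := by
    intro j hj
    induction hj using Nat.decreasingInduction with
    | self => exact ⟨h0, h1⟩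
    | of_succ m hm ih => exact ⟨fun h => ih.2 ((hfort m (by omega) ih.1).1 h), ih.1⟩
  obtain ⟨m, hm⟩ := hne
  rcases le_total m k with h | h
  · exact (down m h).1 hm
  · obtain ⟨d, rfl⟩ := Nat.exists_eq_add_of_le h
    exact (up d).1 hm

/-- **Theorem.** Let `T` be a tree of order `n ≥ 2`, let `F` be a minimal fort
of `T`, and let `u ≠ v` be vertices of `F`. If `W` is the vertex set of the
unique `(u,v)`-path of `T` (of length `ℓ`), then the induced subgraph `T[W]`
is a path graph of order `ℓ + 1`, and `F ∩ W` is a minimal fort of `T[W]`. -/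
theorem tree_minimalFort_induced_path {V : Type*} [Fintype V]
    {T : SimpleGraph V} (hT : T.IsTree) (hn : 2 ≤ Fintype.card V)
    {F : Set V} (hF : IsMinimalFort T F)
    {u v : V} (hu : u ∈ F) (hv : v ∈ F) (huv : u ≠ v) (p : T.Path u v) :
    Nonempty
      ((T.induce {x | x ∈ p.1.support}) ≃g
        SimpleGraph.pathGraph (p.1.length + 1)) ∧
    IsMinimalFort (T.induce {x | x ∈ p.1.support})
      {x : {x // x ∈ p.1.support} | (x : V) ∈ F} := by
  have hac := hT.isAcyclic
  obtain ⟨p, hp⟩ := p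
  dsimp only
  set f : ℕ → V := p.getVert with hf
  set l : ℕ := p.length with hl
  have hadj : ∀ i < l, T.Adj (f i) (f (i + 1)) := fun i hi => p.adj_getVert_succ hi
  have hinj : ∀ i ≤ l, ∀ j ≤ l, f i = f j → i = j := fun i hi j hj e =>
    hp.getVert_injOn hi hj e
  have hmem : ∀ i, f i ∈ p.support := fun i => p.getVert_mem_support i
  have hsupp : ∀ x ∈ p.support, ∃ i ≤ l, f i = x := fun x hx => by
    obtain ⟨n, h1, h2⟩ := Walk.mem_support_iff_exists_getVert.1 hx
    exact ⟨n, h2, h1⟩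
  have h0F : f 0 ∈ F := by simpa [hf] using hu
  have hlF : f l ∈ F := by simpa [hf, hl] using hv
  refine ⟨⟨RelIso.symm ⟨Equiv.ofBijective
      (fun i : Fin (l + 1) => (⟨f i, hmem i⟩ : {x | x ∈ p.support})) ⟨?_, ?_⟩, ?_⟩⟩, ?_, ?_⟩
  · intro i j e
    exact Fin.ext (hinj _ (by omega) _ (by omega) (congrArg Subtype.val e))
  · rintro ⟨x, hx⟩
    obtain ⟨i, hi, rfl⟩ := hsupp x hx
    exact ⟨⟨i, by omega⟩, rfl⟩
  · intro i j
    simp only [comap_adj, Function.Embedding.subtype_apply, pathGraph_adj]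
    exact adj_iff hac hadj hinj (by omega) (by omega)
  · refine ⟨⟨⟨f 0, hmem 0⟩, h0F⟩, ?_⟩
    rintro ⟨x, hx⟩ hxF ⟨y, -, huniq⟩
    obtain ⟨i, hi, rfl⟩ := hsupp x hx
    replace hxF : f i ∉ F := hxF
    -- An omitted vertex is interior, and both of its path neighbours belong to `F`.
    have hi0 : i ≠ 0 := by rintro rfl; exact hxF h0F
    have hil : i ≠ l := by rintro rfl; exact hxF hlF
    obtain ⟨k, rfl⟩ := Nat.exists_eq_succ_of_ne_zero hi0
    have hk : k + 1 < l := by omega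
    have e1 := huniq ⟨f k, hmem k⟩
      ⟨hF.pred_mem hac hadj hinj h0F hlF hk hxF, (hadj k (by omega)).symm⟩
    have e2 := huniq ⟨f (k + 2), hmem _⟩
      ⟨hF.succ_mem hac hadj hinj h0F hlF hk hxF, hadj (k + 1) hk⟩
    have := hinj _ (by omega) _ (by omega) (congrArg Subtype.val (e1.trans e2.symm))
    omega
  · rintro F' ⟨hsub, hnsub⟩ hfort
    obtain ⟨⟨x, hx⟩, hxF, hxF'⟩ := Set.not_subset.1 hnsub
    obtain ⟨i, hi, rfl⟩ := hsupp x hx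
    -- Indices are shifted by one, so that `0` and `l + 2` are padding outside the path.
    let s : ℕ → Prop := fun m =>
      1 ≤ m ∧ m ≤ l + 1 ∧ (⟨f (m - 1), hmem _⟩ : {x | x ∈ p.support}) ∈ F'
    have hs : ∀ m, s m → 1 ≤ m ∧ m ≤ l + 1 := fun m h => ⟨h.1, h.2.1⟩
    have hne : ∃ m, s m := by
      obtain ⟨⟨y, hy⟩, hyF⟩ := hfort.1
      obtain ⟨j, hj, rfl⟩ := hsupp y hy
      exact ⟨j + 1, by omega, by omega, hyF⟩
    have hstep : ∀ m, m + 1 ≤ l + 1 → ¬ s (m + 1) → (s m ↔ s (m + 2)) := by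
      intro m hm hns
      have hmF : (⟨f m, hmem m⟩ : {x | x ∈ p.support}) ∉ F' :=
        fun h => hns ⟨by omega, by omega, h⟩
      -- A path neighbour of `f m` is `f (m - 1)` or `f (m + 1)`, so one in `F'` forces the other.
      have hnot := hfort.2 _ hmF
      constructor
      · intro h
        by_contra h2
        refine hnot ⟨⟨f (m - 1), hmem _⟩, ⟨h.2.2, ?_⟩, ?_⟩
        · exact (adj_iff hac hadj hinj (by omega) (by omega)).2 (by have := h.1; omega)
        · rintro ⟨y, hy⟩ ⟨hyF, hya⟩
          obtain ⟨j, hj, rfl⟩ := hsupp y hy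
          rcases (adj_iff hac hadj hinj (by omega) hj).1 hya with rfl | rfl
          · exact (h2 ⟨by omega, by omega, hyF⟩).elim
          · rfl
      · intro h
        by_contra h2
        have hml := h.2.1
        refine hnot ⟨⟨f (m + 1), hmem _⟩, ⟨h.2.2, ?_⟩, ?_⟩
        · exact hadj m (by omega)
        · rintro ⟨y, hy⟩ ⟨hyF, hya⟩
          obtain ⟨j, hj, rfl⟩ := hsupp y hy
          rcases (adj_iff hac hadj hinj (by omega) hj).1 hya with rfl | rfl
          · rfl
          · exact (h2 ⟨by omega, by omega, hyF⟩).elim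
    have hni : ¬ s (i + 1) := fun h => hxF' h.2.2
    have hnext : s (i + 2) := no_two_consecutive hs hne hstep (by omega) hni
    have hprev : s i := by
      by_contra h
      exact hni (no_two_consecutive hs hne hstep (by omega) h)
    have hi1 := hprev.1
    have hi2 := hnext.2.1
    have hpF : f (i - 1) ∈ F := hsub hprev.2.2
    have hnF : f (i + 1) ∈ F := hsub hnext.2.2
    have ha : T.Adj (f i) (f (i - 1)) :=
      (adj_iff hac hadj hinj (by omega) (by omega)).2 (by omega)
    have hb : T.Adj (f i) (f (i + 1)) := hadj i (by omega)
    have hab : f (i - 1) ≠ f (i + 1) := fun e => by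
      have := hinj _ (by omega) _ (by omega) e
      omega
    refine hF.2 _ ⟨Set.inter_subset_left, fun hsubs => ?_⟩
      (hF.1.inter_branch_union hac ha hb hab hpF hnF)
    rcases (hsubs (show f i ∈ F from hxF)).2 with h | h
    · exact notMem_branch hac ha h
    · exact notMem_branch hac hb h
end

section
/- Let S_{l_1,…,l_k} denote the spider graph with junction vertex v and pendant vertices u_1, …, u_k, where k ≥ 2 and for each i the unique (v, u_i)-path has length l_i ≥ 1. Then the number of minimal forts satisfies |𝓕_{S_{l_1,…,l_k}}| = ∏_{i=1}^{k} |𝓕_{P_{l_i−1}}| + Σ_{i=1}^{k} |𝓕_{P_{l_i−2}}| ∏_{j≠i} |𝓕_{P_{l_j−1}}| + Σ_{1≤i<j≤k} |𝓕_{P_{l_i}}| |𝓕_{P_{l_j}}|, under the conventions |𝓕_{P_{−1}}| = 1 and |𝓕_{P_0}| = 0. -/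
/-!
Fix a vertex set `F` of the spider and split according to whether it contains the junction `v`.

A vertex of a leg has at most two neighbours, so the fort condition at such a vertex outside `F`
says that both or neither of its neighbours lie in `F`. If `v ∉ F`, propagation along a leg shows
that the trace of `F` on that leg is empty or a fort of the path formed by the leg (`legOK_false`),
and the condition at `v` says that at least two traces are nonempty. Hence the minimal forts
avoiding `v` consist of a minimal path fort on each of exactly two legs (`minimal_notMem`); they
give the sum over `i < j`.

If `v ∈ F`, then `F` is a fort iff each trace contains the pendant vertex and misses no two
consecutive vertices (`legOK_true`). Such an `F` is minimal iff every trace is minimal with this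
property and at most one neighbour of `v` lies in `F`: two such neighbours would leave a smaller fort
without `v`, and a fort without `v` contains at least two neighbours of `v` (`minimal_mem`). A
minimal trace on a leg of length `n` avoiding the first vertex is a shifted minimal fort of
`P_{n-1}` (`ncard_T0`); one containing it must avoid the second vertex and amounts to a minimal fort
of `P_{n-2}` (`ncard_T1`). No neighbour of `v` gives the product, exactly one gives the
single sum.
-/

open SimpleGraph

/-- The spider graph with junction vertex `none` and `k` legs, the `i`-th leg
being a path of length `l i` ending at the pendant vertex
`some ⟨i, l i - 1⟩`; the vertex `some ⟨i, j⟩` is at distance `j + 1` from the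
junction along leg `i`. -/
def spider (k : ℕ) (l : Fin k → ℕ) :
    SimpleGraph (Option (Σ i : Fin k, Fin (l i))) :=
  SimpleGraph.fromRel (fun x y => match x, y with
    | none, some p => (p.2 : ℕ) = 0
    | some p, some q => (p.1 : Fin k) = q.1 ∧ (q.2 : ℕ) = (p.2 : ℕ) + 1
    | _, _ => False)

/-- `|𝓕_{P_n}|`, the number of minimal forts of the path graph `P_n`.
Note `nmfPath 0 = 0`, matching the convention `|𝓕_{P_0}| = 0`. -/
noncomputable def nmfPath (n : ℕ) : ℕ :=
  numMinimalForts (SimpleGraph.pathGraph n)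

/-- `|𝓕_{P_{m-1}}|` (for a natural number `m`), with the convention
`|𝓕_{P_{-1}}| = 1` when `m = 0`. -/
noncomputable def nmfPathPred (m : ℕ) : ℕ :=
  if m = 0 then 1 else nmfPath (m - 1)

namespace SpiderForts

/-- Every non-junction vertex has at most one neighbour on either side (`R` and `S`), so the
fort condition there says that both or neither of these neighbours belong to the fort. -/
lemma not_existsUnique_or {α : Type*} {R S : α → Prop}
    (hR : ∀ a b, R a → R b → a = b) (hS : ∀ a b, S a → S b → a = b)
    (hd : ∀ a, R a → ¬ S a) :
    (¬ ∃! w, R w ∨ S w) ↔ ((∃ w, R w) ↔ ∃ w, S w) := by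
  constructor
  · intro h
    constructor
    · rintro ⟨a, ha⟩
      by_contra hn
      push Not at hn
      exact h ⟨a, Or.inl ha, fun y hy => hR _ _ (hy.resolve_right (hn y)) ha⟩
    · rintro ⟨a, ha⟩
      by_contra hn
      push Not at hn
      exact h ⟨a, Or.inr ha, fun y hy => hS _ _ (hy.resolve_left (hn y)) ha⟩
  · rintro h ⟨a, ha, hu⟩
    have h1 : (∃ w, R w) ∧ ∃ w, S w := by
      rcases ha with ha | ha
      · exact ⟨⟨a, ha⟩, h.1 ⟨a, ha⟩⟩
      · exact ⟨h.2 ⟨a, ha⟩, ⟨a, ha⟩⟩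
    obtain ⟨⟨b, hb⟩, ⟨c, hc⟩⟩ := h1
    have e1 := hu b (Or.inl hb)
    have e2 := hu c (Or.inr hc)
    subst e1
    exact hd _ hb (e2 ▸ hc)

/-! ### Traces on a single leg -/

/-- The fort condition at all vertices of a path `0, …, n - 1` for a trace `A ⊆ {0, …, n - 1}`, when
vertex `0` has one further neighbour, which belongs to the fort iff `b`. With `b = False` this is
also the fort condition on the isolated path `P_n`. -/
def LegOK (n : ℕ) (b : Prop) (A : Set ℕ) : Prop :=
  (∀ x ∈ A, x < n) ∧ (0 < n → 0 ∉ A → (b ↔ 1 ∈ A)) ∧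
    ∀ x, x + 1 < n → x + 1 ∉ A → (x ∈ A ↔ x + 2 ∈ A)

/-- `A ⊆ {0, …, n - 1}` contains the last vertex `n - 1` and misses no two consecutive vertices.
These are the traces on a leg of the forts containing the junction. -/
def Covers (n : ℕ) (A : Set ℕ) : Prop :=
  (∀ x ∈ A, x < n) ∧ (∀ x, x + 1 = n → x ∈ A) ∧ ∀ x, x + 1 < n → x ∈ A ∨ x + 1 ∈ A

lemma legOK_true {n : ℕ} {A : Set ℕ} : LegOK n True A ↔ Covers n A := by
  constructor
  · rintro ⟨h1, h2, h3⟩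
    have key : ∀ x, x < n → x ∉ A → x + 1 ∈ A := by
      intro x
      induction x with
      | zero => intro h h'; exact (h2 h h').1 trivial
      | succ x ih =>
        intro h h'
        refine (h3 x h h').1 ?_
        by_contra hx
        exact h' (ih (by omega) hx)
    refine ⟨h1, ?_, ?_⟩
    · intro x hx
      by_contra h
      have := h1 _ (key x (by omega) h)
      omega
    · intro x hx
      by_contra! h
      exact h.2 (key x (by omega) h.1)
  · rintro ⟨h1, h2, h3⟩
    have key : ∀ x, x < n → x ∉ A → x + 1 ∈ A := by
      intro x hx hA
      rcases Nat.lt_or_ge (x + 1) n with h | h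
      · exact (h3 x h).resolve_left hA
      · exact absurd (h2 x (by omega)) hA
    refine ⟨h1, fun h h' => ⟨fun _ => key 0 h h', fun _ => trivial⟩, ?_⟩
    intro x hx hA
    exact ⟨fun _ => key _ hx hA, fun _ => (h3 x hx).resolve_right hA⟩

/-- The forts of `P_n`, as subsets of `ℕ`: coverings containing vertex `0`. Membership of `0`
forces `0 < n`. -/
def PathFort (n : ℕ) (A : Set ℕ) : Prop := 0 ∈ A ∧ Covers n A

/-- When the extra neighbour is absent and `0 ∉ A`, the condition propagates along the path and
forces `A = ∅`. -/
lemma legOK_false {n : ℕ} {A : Set ℕ} : LegOK n False A ↔ A = ∅ ∨ PathFort n A := by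
  constructor
  · intro h
    by_cases h0 : 0 ∈ A
    · refine Or.inr ⟨h0, legOK_true.1 ⟨h.1, fun _ h' => absurd h0 h', h.2.2⟩⟩
    · left
      obtain ⟨h1, h2, h3⟩ := h
      have key : ∀ x, x ∉ A ∧ x + 1 ∉ A := by
        intro x
        induction x with
        | zero => exact ⟨h0, fun h => (h2 (by have := h1 _ h; omega) h0).2 h⟩
        | succ x ih =>
          exact ⟨ih.2, fun h => ih.1 ((h3 x (by have := h1 _ h; omega) ih.2).2 h)⟩
      exact Set.eq_empty_of_forall_notMem fun x => (key x).1
  · rintro (rfl | ⟨h0, h⟩)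
    · exact ⟨by simp, by simp, by simp⟩
    · have := legOK_true.2 h
      exact ⟨this.1, fun _ h' => absurd h0 h', this.2.2⟩

lemma PathFort.nonempty {n : ℕ} {A : Set ℕ} (h : PathFort n A) : A.Nonempty := ⟨0, h.1⟩

lemma isFort_path {n : ℕ} {A : Set (Fin n)} :
    IsFort (pathGraph n) A ↔ PathFort n (Fin.val '' A) := by
  have hv : ∀ u : Fin n, u ∉ A → ((¬ ∃! w, w ∈ A ∧ (pathGraph n).Adj u w) ↔
      ((∃ w, w ∈ A ∧ w.val + 1 = u.val) ↔ ∃ w, w ∈ A ∧ u.val + 1 = w.val)) := by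
    intro u hu
    rw [← not_existsUnique_or]
    · simp only [pathGraph_adj, ← and_or_left, or_comm]
    · rintro a b ⟨-, h⟩ ⟨-, h'⟩; ext; omega
    · rintro a b ⟨-, h⟩ ⟨-, h'⟩; ext; omega
    · rintro a ⟨-, h⟩ ⟨-, h'⟩; omega
  have hm : ∀ x, x ∈ Fin.val '' A ↔ ∃ w, w ∈ A ∧ w.val = x := fun x => Iff.rfl
  have h1 : IsFort (pathGraph n) A ↔ A.Nonempty ∧ LegOK n False (Fin.val '' A) := by
    unfold IsFort LegOK
    refine and_congr_right fun _ => ?_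
    constructor
    · intro h
      refine ⟨?_, ?_, ?_⟩
      · rintro x ⟨y, -, rfl⟩; exact y.2
      · intro hn h0
        have h0' : (⟨0, hn⟩ : Fin n) ∉ A := fun h' => h0 ⟨_, h', rfl⟩
        have := (hv _ h0').1 (h _ h0')
        simp only [hm]
        rw [show (∃ w, w ∈ A ∧ w.val = 1) ↔ ∃ w : Fin n, w ∈ A ∧ 0 + 1 = w.val by
          simp [eq_comm]]
        rw [← this]
        simp
      · intro x hn h0
        have h0' : (⟨x + 1, hn⟩ : Fin n) ∉ A := fun h' => h0 ⟨_, h', rfl⟩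
        have := (hv _ h0').1 (h _ h0')
        simp only [hm]
        simpa [eq_comm] using this
    · rintro ⟨-, h2, h3⟩ ⟨u, hu⟩ huA
      rw [hv _ huA]
      have huA' : u ∉ Fin.val '' A := by
        rintro ⟨w, hw, rfl⟩; exact huA hw
      rcases u with _ | x
      · have := h2 hu huA'
        simp only [hm] at this
        simpa [eq_comm] using this
      · have := h3 x hu huA'
        simp only [hm] at this
        simpa [eq_comm] using this
  rw [h1, legOK_false]
  constructor
  · rintro ⟨h, h' | h'⟩
    · simp [h.ne_empty] at h'
    · exact h'
  · intro h
    exact ⟨by simpa using h.nonempty, Or.inr h⟩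

/-! ### Minimal forts of paths -/

/-- The minimal forts of `P_n`, as subsets of `ℕ`: the forts without three consecutive vertices
(see `mem_W`). -/
def W (n : ℕ) : Set (Set ℕ) :=
  {A | PathFort n A ∧ ∀ x, x ∈ A → x + 1 ∈ A → x + 2 ∈ A → False}

lemma mem_W {n : ℕ} {A : Set ℕ} :
    A ∈ W n ↔ PathFort n A ∧ ∀ B ⊆ A, PathFort n B → B = A := by
  refine and_congr_right fun hA => ?_
  constructor
  · intro h B hB hBf
    refine hB.antisymm fun x hx => ?_
    by_contra hxB
    obtain ⟨h0, h1, h2, h3⟩ := hBf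
    have hxn := hA.2.1 x hx
    rcases x with _ | x
    · exact hxB h0
    · have hlt : x + 2 < n := by
        by_contra hh
        exact hxB (h2 (x + 1) (by omega))
      exact h x (hB ((h3 x hxn).resolve_right hxB)) hx (hB ((h3 (x + 1) hlt).resolve_left hxB))
  · intro h x hx hx1 hx2
    obtain ⟨h0, h1, h2, h3⟩ := hA
    have hB := h (A \ {x + 1}) Set.sdiff_subset ⟨⟨h0, by simp⟩, fun y hy => h1 y hy.1, ?_, ?_⟩
    · have : x + 1 ∈ A \ {x + 1} := hB.ge hx1
      exact this.2 rfl
    · intro y hy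
      refine ⟨h2 y hy, ?_⟩
      rintro rfl
      have := h1 _ hx2
      omega
    · intro y hy
      by_cases e1 : y = x + 1
      · subst e1; right; exact ⟨hx2, by simp⟩
      by_cases e2 : y = x
      · subst e2; left; exact ⟨hx, by simp⟩
      rcases h3 y hy with h | h
      · exact Or.inl ⟨h, by simpa using e1⟩
      · exact Or.inr ⟨h, by simpa using e2⟩

lemma isMinimalFort_iff {V : Type*} {G : SimpleGraph V} {F : Set V} :
    IsMinimalFort G F ↔ IsFort G F ∧ ∀ F' ⊆ F, IsFort G F' → F' = F := by
  refine and_congr_right fun _ => ?_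
  constructor
  · intro h F' hs hF
    by_contra hne
    exact h F' (hs.ssubset_of_ne hne) hF
  · intro h F' hs hF
    exact hs.ne (h F' hs.subset hF)

lemma nmfPath_eq (n : ℕ) : nmfPath n = (W n).ncard := by
  unfold nmfPath numMinimalForts
  rw [← Set.ncard_image_of_injective _ (Set.image_injective.2 (Fin.val_injective (n := n)))]
  congr 1
  ext A
  rw [mem_W]
  constructor
  · rintro ⟨A, hA, rfl⟩
    rw [Set.mem_ofPred_eq, isMinimalFort_iff, isFort_path] at hA
    refine ⟨hA.1, fun B hB hBf => ?_⟩
    obtain ⟨C, hC, rfl⟩ := Set.subset_image_iff.1 hB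
    rw [hA.2 C hC (isFort_path.2 hBf)]
  · rintro ⟨hA, h⟩
    obtain ⟨C, rfl⟩ : ∃ C : Set (Fin n), Fin.val '' C = A :=
      ⟨Fin.val ⁻¹' A, Set.image_preimage_eq_of_subset fun x hx => ⟨⟨x, hA.2.1 x hx⟩, rfl⟩⟩
    refine ⟨C, ?_, rfl⟩
    rw [Set.mem_ofPred_eq, isMinimalFort_iff, isFort_path]
    refine ⟨hA, fun B hB hBf => ?_⟩
    exact Set.image_injective.2 Fin.val_injective
      (h _ (Set.image_mono hB) (isFort_path.1 hBf))

/-! ### Minimal coverings of a leg -/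

/-- The inclusion-minimal sets among those with `Covers n` (see `mq_iff`). -/
def MQ (n : ℕ) (A : Set ℕ) : Prop :=
  Covers n A ∧ (0 ∈ A → 1 ∉ A) ∧ ∀ x, x ∈ A → x + 1 ∈ A → x + 2 ∈ A → False

lemma mq_iff {n : ℕ} {A : Set ℕ} :
    MQ n A ↔ Covers n A ∧ ∀ B ⊆ A, Covers n B → B = A := by
  refine and_congr_right fun hA => ?_
  constructor
  · rintro ⟨h01, h⟩ B hB hBf
    refine hB.antisymm fun x hx => ?_
    by_contra hxB
    obtain ⟨h1, h2, h3⟩ := hBf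
    have hxn := hA.1 x hx
    have hlt : x + 1 < n := by
      by_contra hh
      exact hxB (h2 x (by omega))
    have hn := hB ((h3 x hlt).resolve_left hxB)
    rcases x with _ | x
    · exact h01 hx hn
    · exact h x (hB ((h3 x hxn).resolve_right hxB)) hx hn
  · intro h
    obtain ⟨h1, h2, h3⟩ := hA
    -- deleting `y` keeps the covering property when all neighbours of `y` on the leg
    -- are in `A` and `y` is not the last vertex
    have key : ∀ y ∈ A, y + 1 ∈ A → (∀ x, x + 1 = y → x ∈ A) → False := by
      intro z hz hz1 hz0
      have hB := h (A \ {z}) Set.sdiff_subset ⟨fun y hy => h1 y hy.1, ?_, ?_⟩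
      · have : z ∈ A \ {z} := hB.ge hz
        exact this.2 rfl
      · intro y hy
        refine ⟨h2 y hy, ?_⟩
        rintro rfl
        have := h1 _ hz1
        omega
      · intro y hy
        by_cases e1 : y = z
        · subst e1; right; exact ⟨hz1, by simp⟩
        by_cases e2 : y + 1 = z
        · left; exact ⟨hz0 y e2, e1⟩
        rcases h3 y hy with h | h
        · exact Or.inl ⟨h, e1⟩
        · exact Or.inr ⟨h, e2⟩
    refine ⟨fun h0 h1 => key 0 h0 h1 (by simp), fun x hx hx1 hx2 => key (x + 1) hx1 hx2 ?_⟩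
    intro y hy
    obtain rfl : y = x := by omega
    exact hx

/-- Minimal coverings of a leg that avoid its first vertex. -/
def T0 (n : ℕ) : Set (Set ℕ) := {A | MQ n A ∧ 0 ∉ A}

/-- Minimal coverings of a leg that contain its first vertex. -/
def T1 (n : ℕ) : Set (Set ℕ) := {A | MQ n A ∧ 0 ∈ A}

/-- Deleting the first vertex of the leg turns `T0 n` into the minimal forts of `P_{n-1}`. -/
lemma ncard_T0 (n : ℕ) (hn : 1 ≤ n) : (T0 n).ncard = nmfPath (n - 1) := by
  obtain ⟨m, rfl⟩ : ∃ m, n = m + 1 := ⟨n - 1, by omega⟩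
  rw [nmfPath_eq, Nat.add_sub_cancel]
  have hinj : Function.Injective (fun x : ℕ => x + 1) := fun a b h => by simpa using h
  rw [← Set.ncard_image_of_injective (W m) (Set.image_injective.2 hinj)]
  congr 1
  have hs : ∀ B : Set ℕ, ((· + 1) '' B) ∈ T0 (m + 1) ↔ B ∈ W m := by
    intro B
    have e0 : 0 ∉ (· + 1) '' B := by simp
    have e1 : ∀ x, x + 1 ∈ (· + 1) '' B ↔ x ∈ B := by simp
    generalize (· + 1) '' B = C at *
    constructor
    · rintro ⟨⟨⟨h1, h2, h3⟩, h4, h5⟩, h6⟩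
      have hm : 0 < m := by
        by_contra hm
        exact e0 (h2 0 (by omega))
      refine ⟨⟨?_, ?_, ?_, ?_⟩, ?_⟩
      · exact (e1 0).1 ((h3 0 (by omega)).resolve_left e0)
      · intro x hx
        have := h1 _ ((e1 x).2 hx)
        omega
      · intro x hx
        exact (e1 x).1 (h2 _ (by omega))
      · intro x hx
        have := h3 (x + 1) (by omega)
        rwa [e1, e1] at this
      · intro x a b c
        exact h5 (x + 1) ((e1 _).2 a) ((e1 _).2 b) ((e1 _).2 c)
    · rintro ⟨⟨h0, h1, h2, h3⟩, h4⟩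
      have := h1 0 h0
      refine ⟨⟨⟨?_, ?_, ?_⟩, fun h => absurd h e0, ?_⟩, e0⟩
      · rintro (_ | x) hx
        · omega
        · have := h1 x ((e1 _).1 hx); omega
      · rintro (_ | x) hx
        · omega
        · exact (e1 x).2 (h2 x (by omega))
      · rintro (_ | x) hx
        · exact Or.inr ((e1 0).2 h0)
        · rw [e1, e1]; exact h3 x (by omega)
      · rintro (_ | x) a b c
        · exact e0 a
        · exact h4 x ((e1 _).1 a) ((e1 _).1 b) ((e1 _).1 c)
  ext A
  constructor
  · intro hA
    obtain ⟨B, rfl⟩ : ∃ B : Set ℕ, (· + 1) '' B = A := by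
      refine ⟨(· + 1) ⁻¹' A, Set.image_preimage_eq_of_subset ?_⟩
      rintro (_ | x) hx
      · exact absurd hx hA.2
      · exact ⟨x, rfl⟩
    exact ⟨B, (hs B).1 hA, rfl⟩
  · rintro ⟨B, hB, rfl⟩
    exact (hs B).2 hB

/-- For `n ≥ 2` a member of `T1 n` avoids the second vertex, so that deleting the first vertex
leaves a member of `T0 (n - 1)`; for `n = 1` the only member is `{0}`, which is the convention
`|𝓕_{P_{-1}}| = 1`. -/
lemma ncard_T1 (n : ℕ) (hn : 1 ≤ n) : (T1 n).ncard = nmfPathPred (n - 1) := by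
  obtain ⟨m, rfl⟩ : ∃ m, n = m + 1 := ⟨n - 1, by omega⟩
  rw [Nat.add_sub_cancel]
  unfold nmfPathPred
  split_ifs with hm
  · subst hm
    rw [Set.ncard_eq_one]
    refine ⟨{0}, ?_⟩
    ext A
    constructor
    · rintro ⟨h, h0⟩
      ext x
      constructor
      · intro hx
        have := h.1.1 x hx
        simp; omega
      · rintro rfl; exact h0
    · rintro rfl
      refine ⟨⟨⟨by simp, by simp, by simp⟩, by simp, by simp⟩, by simp⟩
  obtain ⟨m, rfl⟩ : ∃ r, m = r + 1 := ⟨m - 1, by omega⟩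
  rw [Nat.add_sub_cancel]
  have h0 := ncard_T0 (m + 1) (by omega)
  rw [Nat.add_sub_cancel] at h0
  rw [← h0]
  have hinj : Function.Injective (fun B : Set ℕ => insert 0 ((· + 1) '' B)) := by
    intro B C h
    ext x
    have := Set.ext_iff.1 h (x + 1)
    simpa using this
  rw [← Set.ncard_image_of_injective (T0 (m + 1)) hinj]
  congr 1
  have hs : ∀ B : Set ℕ, (insert 0 ((· + 1) '' B)) ∈ T1 (m + 1 + 1) ↔ B ∈ T0 (m + 1) := by
    intro B
    have e0 : 0 ∈ insert 0 ((· + 1) '' B) := by simp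
    have e1 : ∀ x, x + 1 ∈ insert 0 ((· + 1) '' B) ↔ x ∈ B := by simp
    generalize insert 0 ((· + 1) '' B) = C at *
    constructor
    · rintro ⟨⟨⟨h1, h2, h3⟩, h4, h5⟩, h6⟩
      have hB0 : 0 ∉ B := fun h => h4 e0 ((e1 0).2 h)
      refine ⟨⟨⟨?_, ?_, ?_⟩, fun h => absurd h hB0, ?_⟩, hB0⟩
      · intro x hx
        have := h1 _ ((e1 x).2 hx)
        omega
      · intro x hx
        exact (e1 x).1 (h2 _ (by omega))
      · intro x hx
        have := h3 (x + 1) (by omega)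
        rwa [e1, e1] at this
      · intro x a b c
        exact h5 (x + 1) ((e1 _).2 a) ((e1 _).2 b) ((e1 _).2 c)
    · rintro ⟨⟨⟨h1, h2, h3⟩, -, h4⟩, h0⟩
      refine ⟨⟨⟨?_, ?_, ?_⟩, fun _ h => h0 ((e1 0).1 h), ?_⟩, e0⟩
      · rintro (_ | x) hx
        · omega
        · have := h1 x ((e1 _).1 hx); omega
      · rintro (_ | x) hx
        · omega
        · exact (e1 x).2 (h2 x (by omega))
      · rintro (_ | x) hx
        · exact Or.inl e0
        · rw [e1, e1]; exact h3 x (by omega)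
      · rintro (_ | x) a b c
        · exact h0 ((e1 0).1 b)
        · exact h4 x ((e1 _).1 a) ((e1 _).1 b) ((e1 _).1 c)
  ext A
  constructor
  · intro hA
    obtain ⟨B, rfl⟩ : ∃ B : Set ℕ, insert 0 ((· + 1) '' B) = A := by
      refine ⟨(· + 1) ⁻¹' A, ?_⟩
      ext x
      rcases x with _ | x
      · simpa using hA.2
      · simp
    exact ⟨B, (hs B).1 hA, rfl⟩
  · rintro ⟨B, hB, rfl⟩
    exact (hs B).2 hB

/-! ### Forts of the spider in terms of their traces -/

variable {k : ℕ} {l : Fin k → ℕ}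

/-- The trace of `F` on leg `i`. -/
def leg (F : Set (Option (Σ i : Fin k, Fin (l i)))) (i : Fin k) : Set ℕ :=
  {m | ∃ h : m < l i, some ⟨i, ⟨m, h⟩⟩ ∈ F}

/-- The vertex set with trace `L i` on leg `i` that contains the junction iff `b`. Elements of
`L i` beyond the end of the leg are ignored. -/
def mk (l : Fin k → ℕ) (b : Prop) (L : Fin k → Set ℕ) : Set (Option (Σ i : Fin k, Fin (l i))) :=
  {x | match x with
    | none => b
    | some p => (p.2 : ℕ) ∈ L p.1}

lemma none_mem_mk {b : Prop} {L : Fin k → Set ℕ} : none ∈ mk l b L ↔ b := Iff.rfl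

lemma leg_mk {b : Prop} {L : Fin k → Set ℕ} {i : Fin k} (h : ∀ x ∈ L i, x < l i) :
    leg (mk l b L) i = L i := by
  ext x
  exact ⟨fun ⟨_, h⟩ => h, fun hx => ⟨h x hx, hx⟩⟩

lemma mk_leg (F : Set (Option (Σ i : Fin k, Fin (l i)))) : mk l (none ∈ F) (leg F) = F := by
  ext x
  rcases x with _ | ⟨i, x, hx⟩
  · exact Iff.rfl
  · exact ⟨fun ⟨_, h⟩ => h, fun h => ⟨hx, h⟩⟩

lemma leg_mono {F F' : Set (Option (Σ i : Fin k, Fin (l i)))} (h : F ⊆ F') (i : Fin k) :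
    leg F i ⊆ leg F' i := fun _ ⟨hx, h'⟩ => ⟨hx, h h'⟩

lemma leg_lt (F : Set (Option (Σ i : Fin k, Fin (l i)))) (i : Fin k) :
    ∀ x ∈ leg F i, x < l i := fun _ h => h.1

lemma mk_subset {F : Set (Option (Σ i : Fin k, Fin (l i)))} {b : Prop} {L : Fin k → Set ℕ}
    (hb : b → none ∈ F) (hL : ∀ i, L i ⊆ leg F i) : mk l b L ⊆ F := by
  rintro (_ | ⟨i, x, hx⟩) h
  · exact hb h
  · exact (hL i h).2

lemma spider_adj_none {w : Option (Σ i : Fin k, Fin (l i))} :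
    (spider k l).Adj none w ↔ ∃ i, ∃ h : 0 < l i, w = some ⟨i, ⟨0, h⟩⟩ := by
  rcases w with _ | ⟨i, x, hx⟩
  · simp [spider]
  · simp only [spider, fromRel_adj]
    constructor
    · rintro ⟨-, h | h⟩
      · obtain rfl : x = 0 := h
        exact ⟨i, hx, rfl⟩
      · exact h.elim
    · rintro ⟨j, hj, h⟩
      cases h
      exact ⟨by simp, Or.inl rfl⟩

/-- `w` is the neighbour of the `x`-th vertex of leg `i` on the side of the junction. -/
def Prev (i : Fin k) (x : ℕ) (w : Option (Σ i : Fin k, Fin (l i))) : Prop :=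
  (x = 0 ∧ w = none) ∨ ∃ y, ∃ h : y < l i, x = y + 1 ∧ w = some ⟨i, ⟨y, h⟩⟩

lemma spider_adj_some {i : Fin k} {x : ℕ} {hx : x < l i}
    {w : Option (Σ i : Fin k, Fin (l i))} :
    (spider k l).Adj (some ⟨i, ⟨x, hx⟩⟩) w ↔
      Prev i x w ∨ ∃ h : x + 1 < l i, w = some ⟨i, ⟨x + 1, h⟩⟩ := by
  rcases w with _ | ⟨j, y, hy⟩
  · simp [spider, Prev]
  · simp only [spider, fromRel_adj, Prev]
    constructor
    · rintro ⟨-, ⟨h, h'⟩ | ⟨h, h'⟩⟩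
      · subst h h'
        exact Or.inr ⟨hy, rfl⟩
      · subst h h'
        exact Or.inl (Or.inr ⟨y, hy, rfl, rfl⟩)
    · rintro ((⟨-, h⟩ | ⟨z, hz, rfl, h⟩) | ⟨hz, h⟩)
      · cases h
      · cases h
        exact ⟨by simp, Or.inr ⟨rfl, rfl⟩⟩
      · cases h
        exact ⟨by simp, Or.inl ⟨rfl, rfl⟩⟩

lemma isFort_spider {F : Set (Option (Σ i : Fin k, Fin (l i)))} :
    IsFort (spider k l) F ↔ (∀ i, LegOK (l i) (none ∈ F) (leg F i)) ∧
      (none ∉ F → ¬ ∃! i, 0 ∈ leg F i) ∧ (none ∈ F ∨ ∃ i, (leg F i).Nonempty) := by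
  have hne : F.Nonempty ↔ (none ∈ F ∨ ∃ i, (leg F i).Nonempty) := by
    constructor
    · rintro ⟨_ | ⟨i, x, hx⟩, h⟩
      · exact Or.inl h
      · exact Or.inr ⟨i, x, hx, h⟩
    · rintro (h | ⟨i, x, hx, h⟩)
      · exact ⟨_, h⟩
      · exact ⟨_, h⟩
  have hnone : (∃! w, w ∈ F ∧ (spider k l).Adj none w) ↔ ∃! i, 0 ∈ leg F i := by
    simp only [spider_adj_none]
    constructor
    · rintro ⟨_, ⟨hw, i, hi, rfl⟩, hu⟩
      refine ⟨i, ⟨hi, hw⟩, ?_⟩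
      rintro j ⟨hj, hj'⟩
      have := hu _ ⟨hj', j, hj, rfl⟩
      simp only [Option.some.injEq, Sigma.mk.injEq] at this
      exact this.1
    · rintro ⟨i, ⟨hi, hi'⟩, hu⟩
      refine ⟨_, ⟨hi', i, hi, rfl⟩, ?_⟩
      rintro _ ⟨hw, j, hj, rfl⟩
      obtain rfl := hu j ⟨hj, hw⟩
      rfl
  have hsome : ∀ i x (hx : x < l i),
      (¬ ∃! w, w ∈ F ∧ (spider k l).Adj (some ⟨i, ⟨x, hx⟩⟩) w) ↔
      ((∃ w, w ∈ F ∧ Prev i x w) ↔ x + 1 ∈ leg F i) := by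
    intro i x hx
    have e : x + 1 ∈ leg F i ↔
        ∃ w, w ∈ F ∧ ∃ h : x + 1 < l i, w = some ⟨i, ⟨x + 1, h⟩⟩ := by
      constructor
      · rintro ⟨h, h'⟩; exact ⟨_, h', h, rfl⟩
      · rintro ⟨_, h', h, rfl⟩; exact ⟨h, h'⟩
    rw [e, ← not_existsUnique_or]
    · simp only [spider_adj_some, ← and_or_left]
    · rintro a b ⟨-, ⟨h, rfl⟩ | ⟨y, hy, rfl, rfl⟩⟩ ⟨-, ⟨h', rfl⟩ | ⟨z, hz, h', rfl⟩⟩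
      · rfl
      · omega
      · omega
      · obtain rfl : y = z := by omega
        rfl
    · rintro a b ⟨-, h, rfl⟩ ⟨-, h', rfl⟩; rfl
    · rintro a ⟨-, ⟨h, rfl⟩ | ⟨y, hy, rfl, rfl⟩⟩ ⟨-, h', h''⟩
      · cases h''
      · simp at h''
        omega
  have hp0 : ∀ i, (∃ w, w ∈ F ∧ Prev i 0 w) ↔ none ∈ F := by
    intro i
    simp [Prev]
  have hp1 : ∀ i x, (∃ w, w ∈ F ∧ Prev i (x + 1) w) ↔ x ∈ leg F i := by
    intro i x
    constructor
    · rintro ⟨_, hw, ⟨h, -⟩ | ⟨y, hy, h, rfl⟩⟩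
      · omega
      · obtain rfl : x = y := by omega
        exact ⟨hy, hw⟩
    · rintro ⟨h, h'⟩
      exact ⟨_, h', Or.inr ⟨x, h, rfl, rfl⟩⟩
  unfold IsFort
  rw [hne]
  constructor
  · rintro ⟨h1, h2⟩
    refine ⟨fun i => ⟨leg_lt F i, ?_, ?_⟩, fun h => by rw [← hnone]; exact h2 none h, h1⟩
    · intro hi h0
      have := (hsome i 0 hi).1 (h2 _ fun h => h0 ⟨hi, h⟩)
      rwa [hp0] at this
    · intro x hi h0
      have := (hsome i _ hi).1 (h2 _ fun h => h0 ⟨hi, h⟩)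
      rwa [hp1] at this
  · rintro ⟨h1, h2, h3⟩
    refine ⟨h3, ?_⟩
    rintro (_ | ⟨i, x, hx⟩) hu
    · rw [hnone]; exact h2 hu
    · rw [hsome]
      have hu' : x ∉ leg F i := fun h => hu h.2
      rcases x with _ | x
      · rw [hp0]; exact (h1 i).2.1 hx hu'
      · rw [hp1]; exact (h1 i).2.2 x hx hu'

lemma isFort_spider_mem {F : Set (Option (Σ i : Fin k, Fin (l i)))} (h : none ∈ F) :
    IsFort (spider k l) F ↔ ∀ i, Covers (l i) (leg F i) := by
  simp [isFort_spider, h, legOK_true]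

lemma isFort_spider_notMem {F : Set (Option (Σ i : Fin k, Fin (l i)))} (h : none ∉ F) :
    IsFort (spider k l) F ↔ (∀ i, leg F i = ∅ ∨ PathFort (l i) (leg F i)) ∧
      ∃ i j, i < j ∧ (leg F i).Nonempty ∧ (leg F j).Nonempty := by
  simp only [isFort_spider, h, legOK_false, false_or, not_false_eq_true, true_imp_iff]
  refine and_congr_right fun h1 => ?_
  have h2 : ∀ i, (leg F i).Nonempty → 0 ∈ leg F i := by
    intro i hi
    exact ((h1 i).resolve_left hi.ne_empty).1
  constructor
  · rintro ⟨h3, i, hi⟩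
    have : ∃ j, j ≠ i ∧ 0 ∈ leg F j := by
      by_contra! hn
      exact h3 ⟨i, h2 i hi, fun j hj => by_contra fun hji => hn j hji hj⟩
    obtain ⟨j, hji, hj⟩ := this
    rcases lt_or_gt_of_ne hji with h | h
    · exact ⟨j, i, h, ⟨_, hj⟩, hi⟩
    · exact ⟨i, j, h, hi, ⟨_, hj⟩⟩
  · rintro ⟨i, j, hij, hi, hj⟩
    refine ⟨?_, i, hi⟩
    rintro ⟨m, -, hm⟩
    exact hij.ne ((hm i (h2 i hi)).trans (hm j (h2 j hj)).symm)

/-! ### Minimal forts of the spider -/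

/-- The trace families of the minimal forts that avoid the junction and meet exactly the two legs
`q.1` and `q.2`. -/
def Y (l : Fin k → ℕ) (q : Fin k × Fin k) : Set (Fin k → Set ℕ) :=
  Set.univ.pi fun m => if m = q.1 ∨ m = q.2 then W (l m) else {∅}

lemma mem_Y {q : Fin k × Fin k} {L : Fin k → Set ℕ} :
    L ∈ Y l q ↔ L q.1 ∈ W (l q.1) ∧ L q.2 ∈ W (l q.2) ∧ ∀ m, m ≠ q.1 → m ≠ q.2 → L m = ∅ := by
  simp only [Y, Set.mem_univ_pi]
  constructor
  · intro h
    refine ⟨by simpa using h q.1, by simpa using h q.2, fun m h1 h2 => by simpa [h1, h2] using h m⟩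
  · rintro ⟨h1, h2, h3⟩ m
    split_ifs with h
    · rcases h with rfl | rfl <;> assumption
    · push Not at h
      exact h3 m h.1 h.2

lemma Y_lt {q : Fin k × Fin k} {L : Fin k → Set ℕ} (h : L ∈ Y l q) (i : Fin k) :
    ∀ x ∈ L i, x < l i := by
  obtain ⟨h1, h2, h3⟩ := mem_Y.1 h
  by_cases e1 : i = q.1
  · subst e1; exact h1.1.2.1
  by_cases e2 : i = q.2
  · subst e2; exact h2.1.2.1
  · simp [h3 i e1 e2]

lemma minimal_notMem {F : Set (Option (Σ i : Fin k, Fin (l i)))} (h : none ∉ F) :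
    IsMinimalFort (spider k l) F ↔ ∃ q : Fin k × Fin k, q.1 < q.2 ∧ leg F ∈ Y l q := by
  rw [isMinimalFort_iff, isFort_spider_notMem h]
  constructor
  · rintro ⟨⟨h1, i, j, hij, hi, hj⟩, hmin⟩
    have hPi := (h1 i).resolve_left hi.ne_empty
    have hPj := (h1 j).resolve_left hj.ne_empty
    -- shrinking the traces on legs `i` and `j` and emptying all other legs yields a fort
    have key : ∀ A ⊆ leg F i, ∀ B ⊆ leg F j, PathFort (l i) A → PathFort (l j) B →
        ∀ m, (if m = i then A else if m = j then B else ∅) = leg F m := by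
      intro A hA B hB hAf hBf
      set L : Fin k → Set ℕ := fun m => if m = i then A else if m = j then B else ∅ with hL
      have Li : L i = A := by simp [hL]
      have Lj : L j = B := by simp [hL, hij.ne']
      have hLe : ∀ m, L m = ∅ ∨ PathFort (l m) (L m) := by
        intro m
        by_cases e : m = i
        · subst e; rw [Li]; exact Or.inr hAf
        by_cases e' : m = j
        · subst e'; rw [Lj]; exact Or.inr hBf
        · left; simp [hL, e, e']
      have hLs : ∀ m, L m ⊆ leg F m := by
        intro m
        by_cases e : m = i
        · subst e; rw [Li]; exact hA
        by_cases e' : m = j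
        · subst e'; rw [Lj]; exact hB
        · simp [hL, e, e']
      have hlegs : ∀ m, leg (mk l False L) m = L m := fun m =>
        leg_mk fun x hx => leg_lt F m x (hLs m hx)
      have := hmin (mk l False L) (mk_subset False.elim hLs) ?_
      · intro m
        rw [← this, hlegs]
      · rw [isFort_spider_notMem (by simp [none_mem_mk])]
        simp only [hlegs]
        exact ⟨hLe, i, j, hij, Li ▸ hAf.nonempty, Lj ▸ hBf.nonempty⟩
    refine ⟨(i, j), hij, mem_Y.2 ⟨mem_W.2 ⟨hPi, ?_⟩, mem_W.2 ⟨hPj, ?_⟩, ?_⟩⟩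
    · intro B hB hBf
      simpa using key B hB _ subset_rfl hBf hPj i
    · intro B hB hBf
      simpa [hij.ne'] using key _ subset_rfl B hB hPi hBf j
    · intro m h1 h2
      have := key _ subset_rfl _ subset_rfl hPi hPj m
      simpa [show m ≠ i from h1, show m ≠ j from h2] using this.symm
  · rintro ⟨⟨i, j⟩, hij, hY⟩
    obtain ⟨hi, hj, hm⟩ := mem_Y.1 hY
    dsimp at hij hi hj hm
    rw [mem_W] at hi hj
    refine ⟨⟨fun m => ?_, i, j, hij, hi.1.nonempty, hj.1.nonempty⟩, ?_⟩
    · by_cases e : m = i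
      · subst e; exact Or.inr hi.1
      by_cases e' : m = j
      · subst e'; exact Or.inr hj.1
      · exact Or.inl (hm m e e')
    · intro F' hF' hf
      have hn : none ∉ F' := fun h' => h (hF' h')
      rw [isFort_spider_notMem hn] at hf
      obtain ⟨hf, a, b, hab, ha, hb⟩ := hf
      have hmem : ∀ c, (leg F' c).Nonempty → c = i ∨ c = j := by
        intro c hc
        by_contra! hn
        exact (hc.mono (leg_mono hF' c)).ne_empty (hm c hn.1 hn.2)
      have : a = i ∧ b = j := by
        rcases hmem a ha with rfl | rfl <;> rcases hmem b hb with rfl | rfl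
        · exact absurd hab (lt_irrefl _)
        · exact ⟨rfl, rfl⟩
        · exact absurd hab hij.not_gt
        · exact absurd hab (lt_irrefl _)
      obtain ⟨rfl, rfl⟩ := this
      have hleg : leg F' = leg F := by
        funext m
        by_cases e : m = a
        · subst e; exact hi.2 _ (leg_mono hF' _) ((hf m).resolve_left ha.ne_empty)
        by_cases e' : m = b
        · subst e'; exact hj.2 _ (leg_mono hF' _) ((hf m).resolve_left hb.ne_empty)
        · have := leg_mono hF' m
          rw [hm m e e'] at this ⊢
          exact Set.subset_empty_iff.1 this
      rw [← mk_leg F', ← mk_leg F, hleg]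
      simp [h, hn]

/-- The trace families of the minimal forts that contain the junction and none of its
neighbours. -/
def X0 (l : Fin k → ℕ) : Set (Fin k → Set ℕ) := Set.univ.pi fun i => T0 (l i)

/-- The trace families of the minimal forts that contain the junction and, among its neighbours,
exactly the one on leg `i`. -/
def X1 (l : Fin k → ℕ) (i : Fin k) : Set (Fin k → Set ℕ) :=
  Set.univ.pi fun j => if j = i then T1 (l j) else T0 (l j)

/-- The two kinds of trace families together: minimal coverings on every leg, with at most one
neighbour of the junction. -/
lemma mem_X {L : Fin k → Set ℕ} : (L ∈ X0 l ∨ ∃ i, L ∈ X1 l i) ↔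
    (∀ i, MQ (l i) (L i)) ∧ ∀ i j, 0 ∈ L i → 0 ∈ L j → i = j := by
  simp only [X0, X1, Set.mem_univ_pi]
  constructor
  · rintro (h | ⟨i, h⟩)
    · exact ⟨fun i => (h i).1, fun i j hi => absurd hi (h i).2⟩
    · have h0 : ∀ j, 0 ∈ L j → j = i := by
        intro j hj
        by_contra hne
        have := h j
        rw [if_neg hne] at this
        exact this.2 hj
      refine ⟨fun j => ?_, fun a b ha hb => (h0 a ha).trans (h0 b hb).symm⟩
      have := h j
      split_ifs at this
      · exact this.1
      · exact this.1
  · rintro ⟨h1, h2⟩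
    by_cases h : ∃ i, 0 ∈ L i
    · obtain ⟨i, hi⟩ := h
      refine Or.inr ⟨i, fun j => ?_⟩
      split_ifs with e
      · subst e; exact ⟨h1 j, hi⟩
      · exact ⟨h1 j, fun hj => e (h2 j i hj hi)⟩
    · push Not at h
      exact Or.inl fun i => ⟨h1 i, h i⟩

lemma minimal_mem {F : Set (Option (Σ i : Fin k, Fin (l i)))} (h : none ∈ F) :
    IsMinimalFort (spider k l) F ↔ (leg F ∈ X0 l ∨ ∃ i, leg F ∈ X1 l i) := by
  rw [isMinimalFort_iff, isFort_spider_mem h, mem_X]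
  constructor
  · rintro ⟨hf, hmin⟩
    constructor
    · intro i
      refine mq_iff.2 ⟨hf i, fun B hB hBc => ?_⟩
      have hL : ∀ m, Covers (l m) (Function.update (leg F) i B m) := by
        intro m
        by_cases e : m = i
        · subst e; simpa using hBc
        · simpa [e] using hf m
      have hlegs : ∀ m, leg (mk l True (Function.update (leg F) i B)) m =
          Function.update (leg F) i B m := fun m => leg_mk (hL m).1
      have := hmin (mk l True (Function.update (leg F) i B)) (mk_subset (fun _ => h) ?_) ?_
      · rw [← this, hlegs]; simp
      · intro m
        by_cases e : m = i
        · subst e; simpa using hB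
        · simp [e]
      · rw [isFort_spider_mem (none_mem_mk.2 trivial)]
        simpa only [hlegs] using hL
    · intro i j hi hj
      by_contra hne
      -- the legs whose first vertices lie in `F` would carry a fort without the junction
      have := hmin (mk l False (fun m => {x | x ∈ leg F m ∧ 0 ∈ leg F m}))
        (mk_subset False.elim fun m x hx => hx.1) ?_
      · rw [← this] at h
        exact h
      · have hlegs : ∀ m, leg (mk l False (fun m => {x | x ∈ leg F m ∧ 0 ∈ leg F m})) m =
          {x | x ∈ leg F m ∧ 0 ∈ leg F m} := fun m => leg_mk fun x hx => leg_lt F m x hx.1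
        rw [isFort_spider_notMem (by simp [none_mem_mk])]
        simp only [hlegs]
        constructor
        · intro m
          by_cases h0 : 0 ∈ leg F m
          · right
            have : {x | x ∈ leg F m ∧ 0 ∈ leg F m} = leg F m := by ext; simp [h0]
            rw [this]
            exact ⟨h0, hf m⟩
          · left
            simp [h0]
        · rcases lt_or_gt_of_ne hne with h' | h'
          · exact ⟨i, j, h', ⟨0, hi, hi⟩, ⟨0, hj, hj⟩⟩
          · exact ⟨j, i, h', ⟨0, hj, hj⟩, ⟨0, hi, hi⟩⟩
  · rintro ⟨h1, h2⟩
    refine ⟨fun i => (h1 i).1, fun F' hF' hf => ?_⟩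
    by_cases hn : none ∈ F'
    · rw [isFort_spider_mem hn] at hf
      have hleg : leg F' = leg F := funext fun m =>
        (mq_iff.1 (h1 m)).2 _ (leg_mono hF' m) (hf m)
      rw [← mk_leg F', ← mk_leg F, hleg]
      simp [h, hn]
    · rw [isFort_spider_notMem hn] at hf
      obtain ⟨hf, i, j, hij, hi, hj⟩ := hf
      have h0 : ∀ m, (leg F' m).Nonempty → 0 ∈ leg F m := fun m hm =>
        leg_mono hF' m ((hf m).resolve_left hm.ne_empty).1
      exact absurd (h2 i j (h0 i hi) (h0 j hj)) hij.ne

/-! ### Counting -/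

lemma ncard_pi (T : Fin k → Set (Set ℕ)) : (Set.univ.pi T).ncard = ∏ i, (T i).ncard := by
  rw [← Nat.card_coe_set_eq, Nat.card_congr (Equiv.Set.univPi T), Nat.card_pi]
  simp only [Nat.card_coe_set_eq]

lemma ncard_Y {q : Fin k × Fin k} (hq : q.1 < q.2) :
    (Y l q).ncard = nmfPath (l q.1) * nmfPath (l q.2) := by
  rw [Y, ncard_pi, nmfPath_eq, nmfPath_eq,
    ← Finset.mul_prod_erase _ _ (Finset.mem_univ q.1),
    ← Finset.mul_prod_erase _ _ (Finset.mem_erase.2 ⟨hq.ne', Finset.mem_univ q.2⟩),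
    Finset.prod_eq_one]
  · simp
  · intro m hm
    simp only [Finset.mem_erase] at hm
    simp [hm.1, hm.2.1]

lemma ncard_X0 (hl : ∀ i, 1 ≤ l i) : (X0 l).ncard = ∏ i, nmfPath (l i - 1) := by
  rw [X0, ncard_pi]
  exact Finset.prod_congr rfl fun i _ => ncard_T0 _ (hl i)

lemma ncard_X1 (hl : ∀ i, 1 ≤ l i) (i : Fin k) : (X1 l i).ncard =
    nmfPathPred (l i - 1) * ∏ j ∈ Finset.univ.erase i, nmfPath (l j - 1) := by
  rw [X1, ncard_pi, ← Finset.mul_prod_erase _ _ (Finset.mem_univ i)]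
  simp only [if_true, ncard_T1 _ (hl i)]
  congr 1
  refine Finset.prod_congr rfl fun j hj => ?_
  rw [if_neg (Finset.mem_erase.1 hj).1, ncard_T0 _ (hl j)]

lemma mk_injOn (b : Prop) (S : Set (Fin k → Set ℕ)) (hS : ∀ L ∈ S, ∀ i, ∀ x ∈ L i, x < l i) :
    Set.InjOn (mk l b) S := by
  intro L hL L' hL' h
  funext i
  rw [← leg_mk (l := l) (b := b) (hS L hL i), h, leg_mk (hS L' hL' i)]

lemma finite_of_lt (S : Set (Fin k → Set ℕ)) (hS : ∀ L ∈ S, ∀ i, ∀ x ∈ L i, x < l i) :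
    S.Finite := by
  refine Set.Finite.of_finite_image ?_ (mk_injOn True S hS)
  exact Set.toFinite _

lemma ncard_minimal : numMinimalForts (spider k l) =
    (X0 l).ncard + ∑ i, (X1 l i).ncard +
      ∑ q ∈ Finset.univ.filter (fun q : Fin k × Fin k => q.1 < q.2), (Y l q).ncard := by
  have hX : ∀ L, (L ∈ X0 l ∨ ∃ i, L ∈ X1 l i) → ∀ i, ∀ x ∈ L i, x < l i :=
    fun L hL i => ((mem_X.1 hL).1 i).1.1
  have hX0 : (X0 l).Finite := finite_of_lt _ fun L hL => hX L (Or.inl hL)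
  have hX1 : ∀ i, (X1 l i).Finite := fun i => finite_of_lt _ fun L hL => hX L (Or.inr ⟨i, hL⟩)
  have hYf : ∀ q, (Y l q).Finite := fun q => finite_of_lt _ fun L hL => Y_lt hL
  have hX10 : ∀ i, ∀ L ∈ X1 l i, ∀ j, 0 ∈ L j ↔ j = i := by
    intro i L hL j
    have := hL j (Set.mem_univ j)
    dsimp only at this
    split_ifs at this with e
    · exact ⟨fun _ => e, fun _ => this.2⟩
    · exact ⟨fun h => absurd h this.2, fun h => absurd h e⟩
  have hY0 : ∀ q, ∀ L ∈ Y l q, ∀ j, 0 ∈ L j ↔ j = q.1 ∨ j = q.2 := by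
    intro q L hL j
    have := hL j (Set.mem_univ j)
    dsimp only at this
    split_ifs at this with e
    · exact ⟨fun _ => e, fun _ => this.1.1⟩
    · rw [Set.mem_singleton_iff] at this
      simp [this, e]
  set P : Set (Fin k × Fin k) := {q | q.1 < q.2} with hP
  have hset : {F | IsMinimalFort (spider k l) F} =
      mk l True '' (X0 l ∪ ⋃ i, X1 l i) ∪ mk l False '' (⋃ q ∈ P, Y l q) := by
    ext F
    simp only [Set.mem_union, Set.mem_image, Set.mem_iUnion]
    constructor
    · intro hF
      by_cases h : none ∈ F
      · refine Or.inl ⟨leg F, (minimal_mem h).1 hF, ?_⟩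
        conv_rhs => rw [← mk_leg F]
        simp [h]
      · obtain ⟨q, hq, hq'⟩ := (minimal_notMem h).1 hF
        refine Or.inr ⟨leg F, ⟨q, hq, hq'⟩, ?_⟩
        conv_rhs => rw [← mk_leg F]
        simp [h]
    · rintro (⟨L, hL, rfl⟩ | ⟨L, ⟨q, hq, hL⟩, rfl⟩)
      · refine (minimal_mem (none_mem_mk.2 trivial)).2 ?_
        rwa [show leg (mk l True L) = L from funext fun i => leg_mk (hX L hL i)]
      · refine (minimal_notMem (by simp [none_mem_mk])).2 ⟨q, hq, ?_⟩
        rwa [show leg (mk l False L) = L from funext fun i => leg_mk (Y_lt hL i)]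
  have hXu : ∀ L ∈ X0 l ∪ ⋃ i, X1 l i, ∀ i, ∀ x ∈ L i, x < l i := by
    intro L hL
    exact hX L (by simpa using hL)
  have hYu : ∀ L ∈ ⋃ q ∈ P, Y l q, ∀ i, ∀ x ∈ L i, x < l i := by
    intro L hL
    simp only [Set.mem_iUnion] at hL
    obtain ⟨q, -, hL⟩ := hL
    exact Y_lt hL
  unfold numMinimalForts
  rw [hset, Set.ncard_union_eq, (mk_injOn _ _ hXu).ncard_image, (mk_injOn _ _ hYu).ncard_image,
    Set.ncard_union_eq ?_ hX0 (Set.finite_iUnion hX1), Set.ncard_iUnion_of_finite hX1, finsum_eq_sum_of_fintype,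
    Set.Finite.ncard_biUnion (Set.toFinite P) (fun q _ => hYf q)]
  · congr 1
    rw [finsum_mem_eq_finite_toFinset_sum _ (Set.toFinite P)]
    refine Finset.sum_congr ?_ fun _ _ => rfl
    ext q
    simp [hP]
  · intro p hp q hq hne
    rw [Function.onFun, Set.disjoint_left]
    intro L hL hL'
    apply hne
    have h1 := fun j => (hY0 p L hL j).symm.trans (hY0 q L hL' j)
    have a := (h1 p.1).1 (Or.inl rfl)
    have b := (h1 p.2).1 (Or.inr rfl)
    have c := (h1 q.1).2 (Or.inl rfl)
    have d := (h1 q.2).2 (Or.inr rfl)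
    have hp' : p.1 < p.2 := hp
    have hq' : q.1 < q.2 := hq
    ext <;> omega
  · intro i j hne
    rw [Function.onFun, Set.disjoint_left]
    intro L hL hL'
    exact hne ((hX10 j L hL' i).1 ((hX10 i L hL i).2 rfl))
  · rw [Set.disjoint_left]
    intro L hL hL'
    obtain ⟨i, hi⟩ := Set.mem_iUnion.1 hL'
    exact (hL i (Set.mem_univ i)).2 ((hX10 i L hi i).2 rfl)
  · rw [Set.disjoint_left]
    rintro _ ⟨L, -, rfl⟩ ⟨L', -, h⟩
    have : none ∈ mk l False L' := h ▸ none_mem_mk.2 trivial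
    exact this

end SpiderForts

/-- **Theorem (spider formula).** For the spider graph with `k ≥ 2` legs of
lengths `l i ≥ 1`, the number of minimal forts equals
`∏ᵢ |𝓕_{P_{lᵢ-1}}| + Σᵢ |𝓕_{P_{lᵢ-2}}| ∏_{j≠i} |𝓕_{P_{lⱼ-1}}|
  + Σ_{i<j} |𝓕_{P_{lᵢ}}| |𝓕_{P_{lⱼ}}|`,
with conventions `|𝓕_{P_{-1}}| = 1` and `|𝓕_{P_0}| = 0`. -/
theorem numMinimalForts_spider (k : ℕ) (hk : 2 ≤ k)
    (l : Fin k → ℕ) (hl : ∀ i, 1 ≤ l i) :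
    numMinimalForts (spider k l) =
      (∏ i, nmfPath (l i - 1)) +
      (∑ i, nmfPathPred (l i - 1) *
        ∏ j ∈ Finset.univ.erase i, nmfPath (l j - 1)) +
      ∑ q ∈ Finset.univ.filter (fun q : Fin k × Fin k => q.1 < q.2),
        nmfPath (l q.1) * nmfPath (l q.2) := by
  rw [SpiderForts.ncard_minimal, SpiderForts.ncard_X0 hl]
  simp only [SpiderForts.ncard_X1 hl]
  congr 1
  exact Finset.sum_congr rfl fun q hq => SpiderForts.ncard_Y (Finset.mem_filter.1 hq).2
end
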